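/- There exist δ₀ > 0 and c > 0 such that for every δ ∈ (0, δ₀), every smooth ψ : ℝ → [0,1] with ψ(x) = 0 for x ≤ 1 and ψ(x) = 1 for x ≥ √2, and every sufficiently large X (in terms of δ and ψ), one has M(z, y) ≥ c / log X. -/

import Mathlib

open scoped Classical

/-- Generic (β-)sieve weight: for squarefree `d = p₁⋯p_r` with primes
`lo ≤ p_r < ⋯ < p₁ < hi` satisfying `p₁⋯p_m·p_m^β < lvl` for all `m ≤ r` of the
prescribed parity (odd if `useOdd`, even otherwise), the weight is `μ(d)`;
otherwise it is `0` (and `1` gets weight `μ(1) = 1`). With `β = 2` these are the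
linear sieve weights `λ^±`, with `β = 30` the β-sieve weights `ρ^±`. -/
noncomputable def sieveWeight (lo hi lvl : ℝ) (β : ℕ) (useOdd : Bool) (d : ℕ) : ℝ :=
  if Squarefree d ∧ (∀ p ∈ d.primeFactors, lo ≤ (p : ℝ) ∧ (p : ℝ) < hi) ∧
      (∀ m : ℕ, 1 ≤ m → m ≤ d.primeFactorsList.length →
        (if useOdd then Odd m else Even m) →
        (((d.primeFactorsList.reverse.take m).prod : ℕ) : ℝ) *
          ((d.primeFactorsList.reverse.getD (m - 1) 1 : ℕ) : ℝ) ^ β < lvl)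
  then (ArithmeticFunction.moebius d : ℝ) else 0

/-- `(k, P(lo,hi))`: the product of the distinct primes `p ∣ k` with `lo ≤ p < hi`. -/
noncomputable def gcdPart (lo hi : ℝ) (k : ℕ) : ℕ :=
  ∏ p ∈ k.primeFactors.filter (fun p : ℕ => lo ≤ (p : ℝ) ∧ (p : ℝ) < hi), p

/-- `k ∣ P(z)`: `k` is squarefree with all prime factors `< z`. -/
def dividesPrimorial (z : ℝ) (k : ℕ) : Prop :=
  Squarefree k ∧ ∀ p ∈ k.primeFactors, (p : ℝ) < z

/-- The lower-bound vector-sieve weight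
`α_k⁻ = 1_{k ∣ P(z)}(λ⁺_{(k,P(w,z))}ρ⁻_{(k,P(w))} + λ⁻_{(k,P(w,z))}ρ⁺_{(k,P(w))}
  − λ⁺_{(k,P(w,z))}ρ⁺_{(k,P(w))})`. -/
noncomputable def alphaMinus (w z D E : ℝ) (k : ℕ) : ℝ :=
  (if dividesPrimorial z k then 1 else 0) *
    (sieveWeight w z D 2 true (gcdPart w z k) * sieveWeight 0 w E 30 false (gcdPart 0 w k)
      + sieveWeight w z D 2 false (gcdPart w z k) * sieveWeight 0 w E 30 true (gcdPart 0 w k)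
      - sieveWeight w z D 2 true (gcdPart w z k) * sieveWeight 0 w E 30 true (gcdPart 0 w k))

/-- The upper-bound sieve weight `α_{k,a}⁺ = 1_{k ∣ P(z)}·λ⁺_{(k,P(w,z)), level Da}·ρ⁺_{(k,P(w))}`. -/
noncomputable def alphaPlusLevel (w z Da E : ℝ) (k : ℕ) : ℝ :=
  (if dividesPrimorial z k then 1 else 0) *
    sieveWeight w z Da 2 true (gcdPart w z k) * sieveWeight 0 w E 30 true (gcdPart 0 w k)

/-- The main term
`M(z,y) = Σ_{d ∣ P(z)} α_d⁻/d − Σ_{a ∈ 𝓘} Σ_p σ(p/(√2)^a)(1 − log p/ log y)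
  Σ_{d ∣ P(z)} α_{d,a}⁺/(dp)`, where `σ(x) = ψ(x) − ψ(x/√2)`,
`𝓘 = [⌊log z/log √2⌋ − 2, ⌊log y/log √2⌋] ∩ ℕ` and `D_a = D/(√2)^{a+2}`. -/
noncomputable def richertMainTerm (w z y D E : ℝ) (ψ : ℝ → ℝ) : ℝ :=
  (∑' d : ℕ, alphaMinus w z D E d / d) -
    ∑ a ∈ Finset.Icc (⌊Real.log z / Real.log (Real.sqrt 2)⌋₊ - 2)
        ⌊Real.log y / Real.log (Real.sqrt 2)⌋₊,
      ∑' p : ℕ, if p.Prime then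
          (ψ ((p : ℝ) / Real.sqrt 2 ^ a) - ψ ((p : ℝ) / Real.sqrt 2 ^ a / Real.sqrt 2)) *
            (1 - Real.log p / Real.log y) *
            ∑' d : ℕ, alphaPlusLevel w z (D / Real.sqrt 2 ^ (a + 2)) E d / ((d : ℝ) * p)
        else 0

/-!
Both families of weights factor over the primes below and above `w`. Rearranged, the main term is
`M = R⁺ (Λ⁻ - T) - Λ⁺ (R⁺ - R⁻)`, where `R^±` are the β-sieve sums, `Λ^±` the linear sieve sums,
and `T` is the sum over `a` and `p` of Richert's weights against linear sieve sums of level `D_a`.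
The fundamental lemma gives `R⁺ - R⁻ ≪ δ R⁺`, so the last term is of smaller order in `δ`.

Iterating Buchstab's identity finitely often bounds `Λ^±` by the delay integrals `A(s) = s F(s)` and
`a(s) = s f(s)` of the linear sieve functions, up to an arbitrarily small error. The weights
`σ(p / √2 ^ a)` telescope in `a` to at most `1` for each prime `p`, and the level `D_a` is `D / p`
up to a bounded factor, so `T` reduces to a sum over primes, evaluated by Mertens' theorem. With
`z = X ^ u`, `y = X ^ t`, `D = X ^ v` this gives, for a constant `c > 0` and in the limit,
`c (Λ⁻ - T) ≥ δ (a(v/u) / v - A(v/u - 1) I)`, where `I = richertIntegral u t v`. For the exponents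
`5/36`, `1/2`, `5/9` one has `A(3) = 1` and `a(4) = log 3`, and positivity becomes
`(6/5) ^ 9 < 15/2`.
-/

section Mertens

open Real
open scoped Nat

theorem log_factorial_eq_sum_primesLE (n : ℕ) :
    log n ! = ∑ p ∈ Nat.primesLE n, (n !).factorization p * log p := by
  rw [log_nat_eq_sum_factorization]
  refine Finsupp.sum_of_support_subset _ (fun p hp ↦ ?_) _ (fun p _ ↦ by simp)
  have hp' := Nat.mem_primeFactors.1 (by simpa only [Nat.support_factorization] using hp)
  exact Nat.mem_primesLE.2 ⟨hp'.1.dvd_factorial.1 hp'.2.1, hp'.1⟩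

theorem div_sub_one_le_factorization_factorial {p n : ℕ} (hp : p.Prime) :
    (n : ℝ) / p - 1 ≤ (n !).factorization p := by
  have hdiv : n / p ≤ (n !).factorization p := by
    rcases lt_or_ge n p with h | h
    · simp [Nat.div_eq_of_lt h]
    · rw [Nat.factorization_factorial hp (Nat.lt_succ_self _)]
      have hlog := Nat.log_pos hp.one_lt h
      calc n / p = n / p ^ 1 := by rw [pow_one]
        _ ≤ _ := Finset.single_le_sum (f := fun i ↦ n / p ^ i) (fun i _ ↦ Nat.zero_le _)
          (Finset.mem_Ico.2 ⟨le_rfl, by omega⟩)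
  have hfloor := Nat.lt_floor_add_one ((n : ℝ) / p)
  rw [Nat.floor_div_eq_div] at hfloor
  have : ((n / p : ℕ) : ℝ) ≤ (n !).factorization p := by exact_mod_cast hdiv
  linarith

theorem sum_log_div_primesLE_le {n : ℕ} (hn : n ≠ 0) :
    ∑ p ∈ Nat.primesLE n, log p / p ≤ log n + log 4 := by
  have hn0 : (0 : ℝ) < n := by positivity
  have htheta := Chebyshev.theta_le_log4_mul_x hn0.le
  rw [Chebyshev.theta_eq_sum_primesLE_log] at htheta
  have hsum : n * ∑ p ∈ Nat.primesLE n, log p / p - ∑ p ∈ Nat.primesLE n, log p ≤ n * log n := calc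
    _ = ∑ p ∈ Nat.primesLE n, ((n : ℝ) / p - 1) * log p := by
      rw [Finset.mul_sum, ← Finset.sum_sub_distrib]
      exact Finset.sum_congr rfl fun p _ ↦ by ring
    _ ≤ ∑ p ∈ Nat.primesLE n, (n !).factorization p * log p :=
      Finset.sum_le_sum fun p hp ↦ mul_le_mul_of_nonneg_right
        (div_sub_one_le_factorization_factorial (Nat.mem_primesLE.1 hp).2) (log_natCast_nonneg p)
    _ = log n ! := (log_factorial_eq_sum_primesLE n).symm
    _ ≤ log ((n : ℝ) ^ n) := log_le_log (by positivity) (by exact_mod_cast Nat.factorial_le_pow n)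
    _ = n * log n := log_pow _ _
  exact le_of_mul_le_mul_left (by linarith) hn0

theorem log_div_mul_sub_one_le {x : ℝ} (hx : 2 ≤ x) :
    log x / (x * (x - 1)) ≤ 4 * (1 / x ^ (3 / 2 : ℝ)) := by
  have hlog := log_le_rpow_div (x := x) (ε := 1 / 2) (by linarith) (by norm_num)
  have hpow : x ^ (1 / 2 : ℝ) * x ^ (3 / 2 : ℝ) = x ^ 2 := by
    rw [← rpow_add (by linarith)]
    norm_num
  have hpos : 0 < x ^ (3 / 2 : ℝ) := by positivity
  rw [mul_one_div, div_le_div_iff₀ (by nlinarith) hpos]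
  calc log x * x ^ (3 / 2 : ℝ) ≤ x ^ (1 / 2 : ℝ) / (1 / 2) * x ^ (3 / 2 : ℝ) := by gcongr
    _ = 2 * x ^ 2 := by rw [← hpow]; ring
    _ ≤ 4 * (x * (x - 1)) := by nlinarith

theorem exists_sum_log_div_mul_sub_one_le :
    ∃ C : ℝ, 0 ≤ C ∧ ∀ n : ℕ, ∑ p ∈ Nat.primesLE n, log p / (p * ((p : ℝ) - 1)) ≤ C := by
  have hsum : Summable fun k : ℕ ↦ 4 * (1 / (k : ℝ) ^ (3 / 2 : ℝ)) :=
    (summable_one_div_nat_rpow.2 (by norm_num)).mul_left 4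
  refine ⟨∑' k : ℕ, 4 * (1 / (k : ℝ) ^ (3 / 2 : ℝ)), tsum_nonneg fun k ↦ by positivity,
    fun n ↦ le_trans (Finset.sum_le_sum fun p hp ↦ ?_)
      (hsum.sum_le_tsum (Nat.primesLE n) fun k _ ↦ by positivity)⟩
  exact log_div_mul_sub_one_le (by exact_mod_cast (Nat.mem_primesLE.1 hp).2.two_le)

theorem exists_le_sum_log_div_primesLE :
    ∃ C : ℝ, 0 ≤ C ∧ ∀ n : ℕ, n ≠ 0 → log n - C ≤ ∑ p ∈ Nat.primesLE n, log p / p := by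
  obtain ⟨C, hC, hbound⟩ := exists_sum_log_div_mul_sub_one_le
  refine ⟨C + 1, by linarith, fun n hn ↦ ?_⟩
  have hn0 : (0 : ℝ) < n := by positivity
  have hstirling : n * log n - n ≤ log n ! := by
    have hlower := Stirling.le_log_factorial_stirling hn
    have hlog := log_natCast_nonneg n
    have hpi : 0 ≤ log (2 * π) := log_nonneg (by linarith [pi_gt_three])
    linarith
  have hsplit : log n ! ≤ n * (∑ p ∈ Nat.primesLE n, log p / p +
      ∑ p ∈ Nat.primesLE n, log p / (p * ((p : ℝ) - 1))) := by
    rw [log_factorial_eq_sum_primesLE, ← Finset.sum_add_distrib, Finset.mul_sum]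
    refine Finset.sum_le_sum fun p hp ↦ ?_
    have hprime := (Nat.mem_primesLE.1 hp).2
    have hp1 : (p : ℝ) - 1 ≠ 0 := sub_ne_zero.2 (by exact_mod_cast hprime.one_lt.ne')
    have hlegendre : ((n !).factorization p : ℝ) ≤ n / (p - 1) := by
      have := (Nat.cast_le (α := ℝ)).2 (Nat.factorization_factorial_le_div_pred hprime n)
      refine this.trans (Nat.cast_div_le.trans_eq ?_)
      rw [Nat.cast_pred hprime.pos]
    calc (n !).factorization p * log p ≤ n / (p - 1) * log p :=
          mul_le_mul_of_nonneg_right hlegendre (log_natCast_nonneg p)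
      _ = n * (log p / p + log p / (p * ((p : ℝ) - 1))) := by
        have hp0 : (p : ℝ) ≠ 0 := by exact_mod_cast hprime.ne_zero
        field_simp
        ring
  have hC' := mul_le_mul_of_nonneg_left (hbound n) hn0.le
  exact le_of_mul_le_mul_left (by linarith) hn0

theorem exists_abs_sum_log_div_primesLE_sub_log_le :
    ∃ C : ℝ, 0 ≤ C ∧ ∀ n : ℕ, n ≠ 0 → |∑ p ∈ Nat.primesLE n, log p / p - log n| ≤ C := by
  obtain ⟨C, hC, hlower⟩ := exists_le_sum_log_div_primesLE
  have hlog4 : 0 ≤ log 4 := log_nonneg (by norm_num)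
  refine ⟨C + log 4, by linarith, fun n hn ↦ abs_sub_le_iff.2 ⟨?_, ?_⟩⟩
  · linarith [sum_log_div_primesLE_le hn]
  · linarith [hlower n hn]

theorem sum_Ico_prime_eq_sub {m n : ℕ} (hm : m ≠ 0) (hmn : m ≤ n + 1) (f : ℕ → ℝ) :
    ∑ p ∈ Finset.Ico m (n + 1) with p.Prime, f p =
      ∑ p ∈ Nat.primesLE n, f p - ∑ p ∈ Nat.primesLE (m - 1), f p := by
  simp only [Nat.primesLE, Nat.primesBelow, Finset.sum_filter]
  rw [Nat.sub_add_cancel (Nat.one_le_iff_ne_zero.2 hm), Finset.sum_Ico_eq_sub _ hmn]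

theorem log_le_log_pred_add_log_two {k : ℕ} (hk : 2 ≤ k) :
    log k ≤ log ((k - 1 : ℕ) : ℝ) + log 2 := by
  have hk1 : ((k - 1 : ℕ) : ℝ) ≠ 0 := by exact_mod_cast (Nat.sub_pos_of_lt hk).ne'
  rw [← log_mul hk1 two_ne_zero]
  refine log_le_log (by exact_mod_cast (by omega : 0 < k)) ?_
  exact_mod_cast (by omega : k ≤ (k - 1) * 2)

theorem exists_sum_Ico_log_div_bounds :
    ∃ C : ℝ, 0 ≤ C ∧ ∀ m n : ℕ, 2 ≤ m → m ≤ n →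
      log n - log m - C ≤ ∑ p ∈ Finset.Ico m n with p.Prime, log p / p ∧
      ∑ p ∈ Finset.Ico m (n + 1) with p.Prime, log p / p ≤ log n - log m + C := by
  obtain ⟨C, hC, hmertens⟩ := exists_abs_sum_log_div_primesLE_sub_log_le
  have hlog2 : 0 ≤ log 2 := log_nonneg one_le_two
  refine ⟨2 * C + log 2, by linarith, fun m n hm hmn ↦ ?_⟩
  have hmono : log ((m - 1 : ℕ) : ℝ) ≤ log m :=
    log_le_log (by exact_mod_cast Nat.sub_pos_of_lt hm) (by exact_mod_cast Nat.sub_le m 1)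
  have hpredm := log_le_log_pred_add_log_two hm
  have hpredn := log_le_log_pred_add_log_two (hm.trans hmn)
  have hSm := abs_le.1 (hmertens (m - 1) (by omega))
  have hSn := abs_le.1 (hmertens n (by omega))
  have hSn' := abs_le.1 (hmertens (n - 1) (by omega))
  constructor
  · have hsum := sum_Ico_prime_eq_sub (n := n - 1) (by omega : m ≠ 0) (by omega)
      fun p ↦ log p / p
    rw [Nat.sub_add_cancel (by omega)] at hsum
    linarith
  · rw [sum_Ico_prime_eq_sub (by omega) (by omega)]
    linarith

end Mertens

section PartialSummation

open Real Set MeasureTheory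

variable {a t : ℕ → ℝ} {φ : ℝ → ℝ} {η : ℝ} {m n : ℕ}

theorem antitoneOn_mul_le_integral {x y : ℝ} (hxy : x ≤ y) (hφ : AntitoneOn φ (Icc x y)) :
    (y - x) * φ y ≤ ∫ u in x..y, φ u := by
  rw [← smul_eq_mul, ← intervalIntegral.integral_const]
  refine intervalIntegral.integral_mono_on hxy intervalIntegrable_const
    (AntitoneOn.intervalIntegrable (by rwa [uIcc_of_le hxy])) fun u hu ↦ ?_
  exact hφ hu (right_mem_Icc.2 hxy) hu.2

theorem integral_le_antitoneOn_mul {x y : ℝ} (hxy : x ≤ y) (hφ : AntitoneOn φ (Icc x y)) :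
    ∫ u in x..y, φ u ≤ (y - x) * φ x := by
  rw [← smul_eq_mul, ← intervalIntegral.integral_const]
  refine intervalIntegral.integral_mono_on hxy
    (AntitoneOn.intervalIntegrable (by rwa [uIcc_of_le hxy])) intervalIntegrable_const
    fun u hu ↦ ?_
  exact hφ (left_mem_Icc.2 hxy) hu hu.1

theorem integral_add_integral_succ_of_antitoneOn (ht : Monotone t) (hmn : m ≤ n)
    (hφ : AntitoneOn φ (Icc (t m) (t (n + 1)))) :
    (∫ u in t m..t n, φ u) + ∫ u in t n..t (n + 1), φ u = ∫ u in t m..t (n + 1), φ u := by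
  have hint : ∀ {x y}, x ≤ y → Icc x y ⊆ Icc (t m) (t (n + 1)) →
      IntervalIntegrable φ volume x y := fun hxy hsub ↦
    AntitoneOn.intervalIntegrable (by rw [uIcc_of_le hxy]; exact hφ.mono hsub)
  exact intervalIntegral.integral_add_adjacent_intervals
    (hint (ht hmn) (Icc_subset_Icc_right (ht n.le_succ)))
    (hint (ht n.le_succ) (Icc_subset_Icc_left (ht hmn)))

/-- The last term is what makes the induction on `n` close: it is the boundary term of Abel's
summation, and it is nonpositive at the end. -/
theorem sum_mul_le_integral_add_of_antitoneOn (ht : Monotone t) (hmn : m ≤ n)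
    (hφ : AntitoneOn φ (Icc (t m) (t n)))
    (ha : ∀ l, m ≤ l → l < n → ∑ k ∈ Finset.Ico m (l + 1), a k ≤ t l - t m + η) :
    ∑ k ∈ Finset.Ico m n, a k * φ (t k) ≤ (∫ u in t m..t n, φ u) + η * φ (t m) +
      (∑ k ∈ Finset.Ico m n, a k - (t n - t m) - η) * φ (t n) := by
  induction n, hmn using Nat.le_induction with
  | base => simp
  | succ n hmn ih =>
    specialize ih (hφ.mono (Icc_subset_Icc_right (ht n.le_succ)))
      fun l hml hln ↦ ha l hml (hln.trans n.lt_succ_self)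
    have hstep := ht n.le_succ
    have hint := antitoneOn_mul_le_integral hstep (hφ.mono (Icc_subset_Icc_left (ht hmn)))
    have hS := ha n hmn n.lt_succ_self
    have hle := hφ ⟨ht hmn, hstep⟩ (right_mem_Icc.2 ((ht hmn).trans hstep)) hstep
    rw [← integral_add_integral_succ_of_antitoneOn ht hmn hφ]
    rw [Finset.sum_Ico_succ_top hmn] at hS ⊢
    rw [Finset.sum_Ico_succ_top hmn]
    linarith [mul_nonneg (sub_nonneg.2 hS) (sub_nonneg.2 hle)]

theorem integral_sub_le_sum_mul_of_antitoneOn (ht : Monotone t) (hmn : m ≤ n)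
    (hφ : AntitoneOn φ (Icc (t m) (t n)))
    (ha : ∀ l, m ≤ l → l ≤ n → t l - t m - η ≤ ∑ k ∈ Finset.Ico m l, a k) :
    (∫ u in t m..t n, φ u) - η * φ (t m) +
      (∑ k ∈ Finset.Ico m n, a k - (t n - t m) + η) * φ (t n) ≤
        ∑ k ∈ Finset.Ico m n, a k * φ (t k) := by
  induction n, hmn using Nat.le_induction with
  | base => simp
  | succ n hmn ih =>
    specialize ih (hφ.mono (Icc_subset_Icc_right (ht n.le_succ)))
      fun l hml hln ↦ ha l hml (hln.trans n.le_succ)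
    have hstep := ht n.le_succ
    have hint := integral_le_antitoneOn_mul hstep (hφ.mono (Icc_subset_Icc_left (ht hmn)))
    have hS := ha (n + 1) (hmn.trans n.le_succ) le_rfl
    have hle := hφ ⟨ht hmn, hstep⟩ (right_mem_Icc.2 ((ht hmn).trans hstep)) hstep
    rw [← integral_add_integral_succ_of_antitoneOn ht hmn hφ]
    rw [Finset.sum_Ico_succ_top hmn] at hS ⊢
    rw [Finset.sum_Ico_succ_top hmn]
    linarith [mul_nonneg (sub_nonneg.2 hS) (sub_nonneg.2 hle)]

theorem abs_sum_mul_sub_integral_le_of_antitoneOn (ht : Monotone t) (hmn : m ≤ n)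
    (hφ : AntitoneOn φ (Icc (t m) (t n))) (hφn : 0 ≤ φ (t n)) (hη : 0 ≤ η)
    (hupper : ∀ l, m ≤ l → l < n → ∑ k ∈ Finset.Ico m (l + 1), a k ≤ t l - t m + η)
    (hlower : ∀ l, m ≤ l → l ≤ n → t l - t m - η ≤ ∑ k ∈ Finset.Ico m l, a k) :
    |∑ k ∈ Finset.Ico m n, a k * φ (t k) - ∫ u in t m..t n, φ u| ≤ η * φ (t m) := by
  have hlast : ∑ k ∈ Finset.Ico m n, a k ≤ t n - t m + η := by
    rcases hmn.eq_or_lt with rfl | hlt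
    · simpa using hη
    · have := hupper (n - 1) (by omega) (by omega)
      rw [Nat.sub_add_cancel (by omega)] at this
      linarith [ht (Nat.sub_le n 1)]
  have h1 := sum_mul_le_integral_add_of_antitoneOn ht hmn hφ hupper
  have h2 := integral_sub_le_sum_mul_of_antitoneOn ht hmn hφ hlower
  have h3 := mul_nonneg (sub_nonneg.2 hlast) hφn
  have h4 := mul_nonneg (sub_nonneg.2 (hlower n hmn le_rfl)) hφn
  exact abs_sub_le_iff.2 ⟨by linarith, by linarith⟩

theorem monotone_log_natCast : Monotone fun k : ℕ ↦ log k := by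
  intro k l hkl
  rcases k.eq_zero_or_pos with rfl | hk
  · simpa using log_natCast_nonneg l
  · exact log_le_log (by exact_mod_cast hk) (by exact_mod_cast hkl)

theorem exists_abs_sum_log_div_mul_sub_integral_le :
    ∃ C : ℝ, 0 ≤ C ∧ ∀ m n : ℕ, 2 ≤ m → m ≤ n → ∀ φ : ℝ → ℝ,
      AntitoneOn φ (Icc (log m) (log n)) → 0 ≤ φ (log n) →
        |∑ p ∈ Finset.Ico m n with p.Prime, log p / p * φ (log p) - ∫ u in log m..log n, φ u| ≤
          C * φ (log m) := by
  obtain ⟨C, hC, hmertens⟩ := exists_sum_Ico_log_div_bounds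
  refine ⟨C, hC, fun m n hm hmn φ hφ hφn ↦ ?_⟩
  have habel := abs_sum_mul_sub_integral_le_of_antitoneOn
    (a := fun k ↦ if k.Prime then log k / k else 0) monotone_log_natCast hmn hφ hφn hC
    (fun l hml _ ↦ by simpa only [Finset.sum_filter] using (hmertens m l hm hml).2)
    (fun l hml _ ↦ by simpa only [Finset.sum_filter] using (hmertens m l hm hml).1)
  simpa only [Finset.sum_filter, ite_mul, zero_mul] using habel

end PartialSummation

section SieveProduct

open Real Set

theorem exists_abs_sum_one_div_sub_log_log_le :
    ∃ C : ℝ, 0 ≤ C ∧ ∀ m n : ℕ, 2 ≤ m → m ≤ n →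
      |∑ p ∈ Finset.Ico m n with p.Prime, 1 / (p : ℝ) - (log (log n) - log (log m))| ≤
        C / log m := by
  obtain ⟨C, hC, habel⟩ := exists_abs_sum_log_div_mul_sub_integral_le
  refine ⟨C, hC, fun m n hm hmn ↦ ?_⟩
  have hlogm : 0 < log m := log_pos (by exact_mod_cast hm)
  have hlogn : 0 < log n := hlogm.trans_le (monotone_log_natCast hmn)
  have hanti : AntitoneOn (fun u : ℝ ↦ 1 / u) (Icc (log m) (log n)) :=
    fun u hu v _ huv ↦ one_div_le_one_div_of_le (hlogm.trans_le hu.1) huv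
  have hmain := habel m n hm hmn _ hanti (by positivity)
  rw [integral_one_div_of_pos hlogm hlogn, log_div hlogn.ne' hlogm.ne', mul_one_div] at hmain
  refine le_of_eq_of_le ?_ hmain
  congr 2
  refine Finset.sum_congr rfl fun p hp ↦ ?_
  have hp1 := (Finset.mem_filter.1 hp).2.one_lt
  have hlogp : log p ≠ 0 := (log_pos (by exact_mod_cast hp1)).ne'
  field_simp

theorem filter_prime_Ico_zero (n : ℕ) :
    {p ∈ Finset.Ico 0 n | p.Prime} = {p ∈ Finset.Ico 2 n | p.Prime} := by
  ext p
  simp only [Finset.mem_filter, Finset.mem_Ico]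
  exact ⟨fun h ↦ ⟨⟨h.2.two_le, h.1.2⟩, h.2⟩, fun h ↦ ⟨⟨p.zero_le, h.1.2⟩, h.2⟩⟩

theorem filter_prime_Ico_succ (m n : ℕ) :
    {p ∈ Finset.Ico m (n + 1) | p.Prime} =
      if n.Prime ∧ m ≤ n then insert n {p ∈ Finset.Ico m n | p.Prime}
      else {p ∈ Finset.Ico m n | p.Prime} := by
  by_cases hmn : m ≤ n
  · simp only [← Finset.insert_Ico_right_eq_Ico_add_one hmn, Finset.filter_insert, hmn, and_true]
  · simp [hmn, Finset.Ico_eq_empty_of_le (Nat.succ_le_of_lt (not_le.1 hmn)),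
      Finset.Ico_eq_empty_of_le (not_le.1 hmn).le]

/-- The product `V(m, n) = ∏ (1 - 1/p)` over the primes `m ≤ p < n`, the density of the integers
sifted by these primes. -/
noncomputable def sieveProduct (m n : ℕ) : ℝ :=
  ∏ p ∈ Finset.Ico m n with p.Prime, (1 - 1 / (p : ℝ))

theorem one_div_prime_lt_one {p : ℕ} (hp : p.Prime) : 1 / (p : ℝ) < 1 := by
  have hp1 : (1 : ℝ) < p := by exact_mod_cast hp.one_lt
  rwa [div_lt_one (by linarith)]

theorem sieveProduct_pos (m n : ℕ) : 0 < sieveProduct m n :=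
  Finset.prod_pos fun _ hp ↦ sub_pos.2 (one_div_prime_lt_one (Finset.mem_filter.1 hp).2)

theorem sieveProduct_zero (m : ℕ) : sieveProduct m 0 = 1 := by
  simp [sieveProduct]

theorem sieveProduct_succ (m n : ℕ) :
    sieveProduct m (n + 1) =
      sieveProduct m n - if n.Prime ∧ m ≤ n then 1 / (n : ℝ) * sieveProduct m n else 0 := by
  unfold sieveProduct
  rw [filter_prime_Ico_succ]
  split_ifs
  · rw [Finset.prod_insert (by simp)]
    ring
  · rw [sub_zero]

theorem sieveProduct_antitone (m : ℕ) : Antitone (sieveProduct m) := by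
  refine antitone_nat_of_succ_le fun n ↦ ?_
  rw [sieveProduct_succ, sub_le_self_iff]
  have := sieveProduct_pos m n
  split_ifs <;> positivity

theorem sieveProduct_eq_one_sub_sum (m n : ℕ) :
    sieveProduct m n =
      1 - ∑ p ∈ Finset.Ico m n with p.Prime, 1 / (p : ℝ) * sieveProduct m p := by
  induction n with
  | zero => simp [sieveProduct_zero]
  | succ n ih =>
    rw [sieveProduct_succ, filter_prime_Ico_succ]
    split_ifs
    · rw [Finset.sum_insert (by simp)]
      linarith
    · rwa [sub_zero]

theorem sieveProduct_le_exp_neg_sum (m n : ℕ) :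
    sieveProduct m n ≤ exp (-∑ p ∈ Finset.Ico m n with p.Prime, 1 / (p : ℝ)) := by
  rw [← Finset.sum_neg_distrib, exp_sum]
  exact Finset.prod_le_prod
    (fun p hp ↦ (sub_pos.2 (one_div_prime_lt_one (Finset.mem_filter.1 hp).2)).le)
    fun p _ ↦ one_sub_le_exp_neg _

theorem exp_neg_sum_le_sieveProduct (m n : ℕ) :
    exp (-∑ p ∈ Finset.Ico m n with p.Prime, 1 / ((p : ℝ) - 1)) ≤ sieveProduct m n := by
  rw [← Finset.sum_neg_distrib, exp_sum]
  refine Finset.prod_le_prod (fun _ _ ↦ (exp_pos _).le) fun p hp ↦ ?_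
  have hp1 : (1 : ℝ) < p := by exact_mod_cast (Finset.mem_filter.1 hp).2.one_lt
  have hp0 : (p : ℝ) ≠ 0 := by linarith
  have hp1' : (p : ℝ) - 1 ≠ 0 := by linarith
  have hpos : 0 < 1 / ((p : ℝ) - 1) + 1 := by
    have := one_div_pos.2 (sub_pos.2 hp1)
    linarith
  calc exp (-(1 / ((p : ℝ) - 1))) ≤ (1 / ((p : ℝ) - 1) + 1)⁻¹ := by
        rw [exp_neg]
        exact inv_anti₀ hpos (add_one_le_exp _)
    _ = 1 - 1 / (p : ℝ) := by
      rw [div_add_one hp1', add_sub_cancel, inv_div, sub_div, div_self hp0]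

theorem exists_sum_one_div_pred_prime_le :
    ∃ C : ℝ, 0 ≤ C ∧ ∀ n : ℕ, ∑ p ∈ Finset.Ico 2 n with p.Prime, 1 / ((p : ℝ) - 1) ≤
      ∑ p ∈ Finset.Ico 2 n with p.Prime, 1 / (p : ℝ) + C := by
  obtain ⟨C, hC, hbound⟩ := exists_sum_log_div_mul_sub_one_le
  have hlog2 : 0 < log 2 := log_pos one_lt_two
  refine ⟨C / log 2, by positivity, fun n ↦ ?_⟩
  have hterm : ∀ p ∈ {p ∈ Finset.Ico 2 n | p.Prime}, 0 ≤ log p / (p * ((p : ℝ) - 1)) ∧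
      1 / ((p : ℝ) - 1) ≤ 1 / (p : ℝ) + log p / (p * ((p : ℝ) - 1)) / log 2 := by
    intro p hp
    have hp2 : (2 : ℝ) ≤ p := by exact_mod_cast (Finset.mem_filter.1 hp).2.two_le
    have hp1 : 0 < (p : ℝ) - 1 := by linarith
    have hlog : 1 ≤ log p / log 2 := (one_le_div hlog2).2 (log_le_log two_pos hp2)
    refine ⟨div_nonneg (hlog2.trans_le (log_le_log two_pos hp2)).le (by positivity), ?_⟩
    calc 1 / ((p : ℝ) - 1) = 1 / p + 1 / (p * (p - 1)) * 1 := by field_simp; ring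
      _ ≤ 1 / p + 1 / (p * (p - 1)) * (log p / log 2) := by gcongr
      _ = 1 / p + log p / (p * (p - 1)) / log 2 := by ring
  have hsub : {p ∈ Finset.Ico 2 n | p.Prime} ⊆ Nat.primesLE n := fun p hp ↦ by
    simp only [Finset.mem_filter, Finset.mem_Ico] at hp
    exact Nat.mem_primesLE.2 ⟨hp.1.2.le, hp.2⟩
  calc ∑ p ∈ Finset.Ico 2 n with p.Prime, 1 / ((p : ℝ) - 1)
      ≤ ∑ p ∈ Finset.Ico 2 n with p.Prime, 1 / (p : ℝ) +
          (∑ p ∈ Finset.Ico 2 n with p.Prime, log p / (p * ((p : ℝ) - 1))) / log 2 := by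
        rw [Finset.sum_div, ← Finset.sum_add_distrib]
        exact Finset.sum_le_sum fun p hp ↦ (hterm p hp).2
    _ ≤ ∑ p ∈ Finset.Ico 2 n with p.Prime, 1 / (p : ℝ) + C / log 2 := by
        have hprimes := Finset.sum_le_sum_of_subset_of_nonneg
          (f := fun p : ℕ ↦ log p / (p * ((p : ℝ) - 1))) hsub fun p hp _ ↦ by
            have := (Nat.mem_primesLE.1 hp).2.one_lt
            have hp1 : 0 ≤ (p : ℝ) - 1 := sub_nonneg.2 (by exact_mod_cast this.le)
            have := log_natCast_nonneg p
            positivity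
        gcongr
        exact hprimes.trans (hbound n)

theorem exists_sieveProduct_bounds :
    ∃ c C : ℝ, 0 < c ∧ 0 < C ∧ ∀ n : ℕ, 2 ≤ n →
      c / log n ≤ sieveProduct 0 n ∧ sieveProduct 0 n ≤ C / log n := by
  obtain ⟨A, _, hmertens⟩ := exists_abs_sum_one_div_sub_log_log_le
  obtain ⟨B, _, hpred⟩ := exists_sum_one_div_pred_prime_le
  set K := log (log 2) + A / log 2
  set k := log (log 2) - A / log 2 - B
  refine ⟨exp k, exp K, exp_pos _, exp_pos _, fun n hn ↦ ?_⟩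
  have hlog : 0 < log n := log_pos (by exact_mod_cast hn)
  have hsum := abs_le.1 (hmertens 2 n le_rfl hn)
  rw [Nat.cast_ofNat] at hsum
  have hlower := exp_neg_sum_le_sieveProduct 0 n
  have hupper := sieveProduct_le_exp_neg_sum 0 n
  rw [filter_prime_Ico_zero] at hlower hupper
  have hexp : ∀ x : ℝ, exp x / log n = exp (x - log (log n)) := fun x ↦ by
    rw [exp_sub, exp_log hlog]
  rw [hexp, hexp]
  exact ⟨(exp_le_exp.2 (by linarith [hpred n])).trans hlower,
    hupper.trans (exp_le_exp.2 (by linarith))⟩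

end SieveProduct

section SieveSum

open Real

/-- The sieve sum `∑ λ_d / d` over the squarefree `d` composed of primes `m ≤ p < n`, where `λ` are
the upper (`b = true`) or lower (`b = false`) β-sieve weights of level `D`. It is defined through
Buchstab's recursion on the largest prime factor of `d`; `sum_sieveWeight_div_eq_sieveSum`
identifies it with the sum. -/
noncomputable def sieveSum (m β : ℕ) : ℕ → Bool → ℝ → ℝ
  | 0, _, _ => 1
  | n + 1, b, D => sieveSum m β n b D -
      if n.Prime ∧ m ≤ n ∧ (b = true → (n : ℝ) ^ (β + 1) < D) then
        1 / (n : ℝ) * sieveSum m β n (!b) (D / n) else 0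

theorem sieveSum_eq_one_sub_sum (m β n : ℕ) (b : Bool) (D : ℝ) :
    sieveSum m β n b D =
      1 - ∑ p ∈ Finset.Ico m n with p.Prime,
        if b = true → (p : ℝ) ^ (β + 1) < D then
          1 / (p : ℝ) * sieveSum m β p (!b) (D / p) else 0 := by
  induction n with
  | zero => simp [sieveSum]
  | succ n ih =>
    rw [sieveSum, ih, filter_prime_Ico_succ]
    by_cases hn : n.Prime ∧ m ≤ n
    · rw [if_pos hn, Finset.sum_insert (by simp)]
      simp only [hn.1, hn.2, true_and]
      ring
    · rw [if_neg hn, if_neg fun h ↦ hn ⟨h.1, h.2.1⟩, sub_zero]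

theorem sieveSum_false_eq_one_sub_sum (m β n : ℕ) (D : ℝ) :
    sieveSum m β n false D =
      1 - ∑ p ∈ Finset.Ico m n with p.Prime, 1 / (p : ℝ) * sieveSum m β p true (D / p) := by
  rw [sieveSum_eq_one_sub_sum]
  simp

theorem exists_nat_pow_lt_iff_lt {k : ℕ} (hk : k ≠ 0) {x : ℝ} (hx : 0 ≤ x) :
    ∃ N : ℕ, ∀ p : ℕ, (p : ℝ) ^ k < x ↔ p < N := by
  refine ⟨⌈x ^ (1 / k : ℝ)⌉₊, fun p ↦ ?_⟩
  have hroot : (x ^ (1 / k : ℝ)) ^ k = x := by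
    rw [one_div]
    exact rpow_inv_natCast_pow hx hk
  rw [Nat.lt_ceil, ← pow_lt_pow_iff_left₀ p.cast_nonneg (rpow_nonneg hx _) hk, hroot]

theorem filter_prime_Ico_min (m n N : ℕ) :
    {p ∈ Finset.Ico m (min n N) | p.Prime} = {p ∈ {p ∈ Finset.Ico m n | p.Prime} | p < N} := by
  ext p
  simp only [Finset.mem_filter, Finset.mem_Ico, lt_min_iff]
  tauto

theorem sieveSum_true_eq_one_sub_sum {m β N : ℕ} {D : ℝ}
    (hN : ∀ p : ℕ, (p : ℝ) ^ (β + 1) < D ↔ p < N) (n : ℕ) :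
    sieveSum m β n true D =
      1 - ∑ p ∈ Finset.Ico m (min n N) with p.Prime,
        1 / (p : ℝ) * sieveSum m β p false (D / p) := by
  rw [sieveSum_eq_one_sub_sum, filter_prime_Ico_min, ← Finset.sum_filter]
  simp only [forall_const, hN, Bool.not_true]

theorem sieveSum_false_le_sieveProduct_le_sieveSum_true (m β n : ℕ) (D : ℝ) :
    sieveSum m β n false D ≤ sieveProduct m n ∧ sieveProduct m n ≤ sieveSum m β n true D := by
  induction n generalizing D with
  | zero => simp [sieveSum, sieveProduct_zero]
  | succ n ih =>
    have hinv : (0 : ℝ) ≤ 1 / n := by positivity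
    have hupper := mul_le_mul_of_nonneg_left (ih (D / n)).2 hinv
    have hlower := mul_le_mul_of_nonneg_left (ih (D / n)).1 hinv
    have hV := mul_nonneg hinv (sieveProduct_pos m n).le
    rw [sieveProduct_succ, sieveSum, sieveSum]
    simp only [Bool.false_eq_true, false_imp_iff, and_true, Bool.not_false, Bool.not_true,
      forall_const, ← and_assoc]
    obtain ⟨h₁, h₂⟩ := ih D
    constructor
    · split_ifs <;> linarith
    · by_cases hn : n.Prime ∧ m ≤ n
      · rw [if_pos hn]
        split_ifs <;> linarith
      · rwa [if_neg hn, if_neg fun h ↦ hn h.1, sub_zero, sub_zero]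

theorem sieveSum_true_pos (m β n : ℕ) (D : ℝ) : 0 < sieveSum m β n true D :=
  (sieveProduct_pos m n).trans_le (sieveSum_false_le_sieveProduct_le_sieveSum_true m β n D).2

end SieveSum

section FundamentalLemma

open Real

theorem mul_sum_one_div_mul_inv_sieveProduct_pow_le (m n k : ℕ) :
    k * ∑ p ∈ Finset.Ico m n with p.Prime, 1 / (p : ℝ) * (sieveProduct m p)⁻¹ ^ k ≤
      (sieveProduct m n)⁻¹ ^ k := by
  induction n with
  | zero => simp [sieveProduct_zero]
  | succ n ih =>
    rw [sieveProduct_succ, filter_prime_Ico_succ]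
    split_ifs with hn
    · have hV := sieveProduct_pos m n
      have hlt := one_div_prime_lt_one hn.1
      have hbernoulli : 1 + k * (1 / (n : ℝ)) ≤ (1 - 1 / (n : ℝ))⁻¹ ^ k := by
        have hinv : 0 ≤ 1 / (n : ℝ) := by positivity
        refine (one_add_mul_le_pow (by linarith) k).trans (pow_le_pow_left₀ (by positivity) ?_ k)
        rw [← one_div, le_div_iff₀ (by linarith)]
        nlinarith
      have hmul := mul_le_mul_of_nonneg_right hbernoulli (by positivity :
        0 ≤ (sieveProduct m n)⁻¹ ^ k)
      rw [Finset.sum_insert (by simp), mul_add]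
      calc _ ≤ (1 + k * (1 / (n : ℝ))) * (sieveProduct m n)⁻¹ ^ k := by linarith
        _ ≤ (1 - 1 / (n : ℝ))⁻¹ ^ k * (sieveProduct m n)⁻¹ ^ k := hmul
        _ = (sieveProduct m n - 1 / n * sieveProduct m n)⁻¹ ^ k := by
          rw [← mul_pow, ← mul_inv, sub_mul, one_mul]
    · rwa [sub_zero]

/-- The error term of the fundamental lemma. The exponents are chosen so that, in Buchstab's
recursion, the sum of the errors over the largest prime is at most half of the error. -/
noncomputable def fundamentalError (K : ℝ) (n : ℕ) (E : ℝ) : ℝ :=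
  K * (sieveProduct 0 n)⁻¹ ^ 9 / log E ^ 10

theorem sum_one_div_mul_fundamentalError_le {K E : ℝ} {n : ℕ} {s : Finset ℕ} (hK : 0 ≤ K)
    (hE : 1 < E) (hs : s ⊆ {p ∈ Finset.Ico 0 n | p.Prime}) (hpE : ∀ p ∈ s, (p : ℝ) ^ 30 ≤ E) :
    ∑ p ∈ s, 1 / (p : ℝ) * fundamentalError K p (E / p) ≤ 1 / 2 * fundamentalError K n E := by
  have hL : 0 < log E := log_pos hE
  have hnonneg : ∀ p : ℕ, 0 ≤ 1 / (p : ℝ) * (sieveProduct 0 p)⁻¹ ^ 9 := fun p ↦ by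
    have := sieveProduct_pos 0 p
    positivity
  have hterm : ∀ p ∈ s, 1 / (p : ℝ) * fundamentalError K p (E / p) ≤
      (30 / 29) ^ 10 * (K / log E ^ 10) * (1 / (p : ℝ) * (sieveProduct 0 p)⁻¹ ^ 9) := by
    intro p hp
    have hp0 : (0 : ℝ) < p := by exact_mod_cast (Finset.mem_filter.1 (hs hp)).2.pos
    have hlogp : 30 * log p ≤ log E := by
      have := log_le_log (by positivity) (hpE p hp)
      rwa [log_pow, Nat.cast_ofNat] at this
    have hlog : 29 / 30 * log E ≤ log (E / p) := by
      rw [log_div (by linarith) hp0.ne']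
      linarith
    calc 1 / (p : ℝ) * fundamentalError K p (E / p)
        = K * (1 / (p : ℝ) * (sieveProduct 0 p)⁻¹ ^ 9) / log (E / p) ^ 10 := by
          rw [fundamentalError]
          ring
      _ ≤ K * (1 / (p : ℝ) * (sieveProduct 0 p)⁻¹ ^ 9) / (29 / 30 * log E) ^ 10 := by
          have := mul_nonneg hK (hnonneg p)
          gcongr
      _ = _ := by
          field_simp
  have hsum : 9 * ∑ p ∈ s, 1 / (p : ℝ) * (sieveProduct 0 p)⁻¹ ^ 9 ≤ (sieveProduct 0 n)⁻¹ ^ 9 :=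
    le_trans (mul_le_mul_of_nonneg_left
      (Finset.sum_le_sum_of_subset_of_nonneg hs fun p _ _ ↦ hnonneg p) (by norm_num))
      (by exact_mod_cast mul_sum_one_div_mul_inv_sieveProduct_pow_le 0 n 9)
  have _hKL : 0 ≤ K / log E ^ 10 := by positivity
  have hpos : 0 ≤ K / log E ^ 10 * (sieveProduct 0 n)⁻¹ ^ 9 := by
    have := sieveProduct_pos 0 n
    positivity
  calc _ ≤ (30 / 29) ^ 10 * (K / log E ^ 10) *
        ∑ p ∈ s, 1 / (p : ℝ) * (sieveProduct 0 p)⁻¹ ^ 9 := by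
        rw [Finset.mul_sum]
        exact Finset.sum_le_sum hterm
    _ ≤ (30 / 29) ^ 10 * (K / log E ^ 10) * (1 / 9 * (sieveProduct 0 n)⁻¹ ^ 9) := by
        gcongr
        linarith
    _ ≤ 1 / 2 * (K / log E ^ 10 * (sieveProduct 0 n)⁻¹ ^ 9) := by linarith
    _ = 1 / 2 * fundamentalError K n E := by rw [fundamentalError]; ring

theorem sieveProduct_sub_fundamentalError_le {K E : ℝ} {n : ℕ} (hK : 0 ≤ K) (hE : 1 < E)
    (hn : (n : ℝ) ^ 30 ≤ E)
    (hupper : ∀ p < n, ∀ E', 1 < E' →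
      sieveSum 0 30 p true E' ≤ sieveProduct 0 p + fundamentalError K p E') :
    sieveProduct 0 n - fundamentalError K n E ≤ sieveSum 0 30 n false E := by
  have hpE : ∀ p ∈ {p ∈ Finset.Ico 0 n | p.Prime}, (p : ℝ) ^ 30 ≤ E := fun p hp ↦ by
    have hpn := (Finset.mem_Ico.1 (Finset.mem_filter.1 hp).1).2
    exact le_trans (by gcongr) hn
  have hsum : ∑ p ∈ Finset.Ico 0 n with p.Prime, 1 / (p : ℝ) * sieveSum 0 30 p true (E / p) ≤
      ∑ p ∈ Finset.Ico 0 n with p.Prime, 1 / (p : ℝ) * sieveProduct 0 p +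
        ∑ p ∈ Finset.Ico 0 n with p.Prime, 1 / (p : ℝ) * fundamentalError K p (E / p) := by
    rw [← Finset.sum_add_distrib]
    refine Finset.sum_le_sum fun p hp ↦ ?_
    have hp1 : (1 : ℝ) < p := by exact_mod_cast (Finset.mem_filter.1 hp).2.one_lt
    have hEp : 1 < E / p := by
      rw [one_lt_div (by linarith)]
      exact (lt_self_pow₀ hp1 (by norm_num)).trans_le (hpE p hp)
    rw [← mul_add]
    gcongr
    exact hupper p (Finset.mem_Ico.1 (Finset.mem_filter.1 hp).1).2 _ hEp
  have herror := sum_one_div_mul_fundamentalError_le hK hE (Finset.Subset.refl _) hpE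
  have hpos : 0 ≤ fundamentalError K n E := by
    have := sieveProduct_pos 0 n
    have := log_pos hE
    unfold fundamentalError
    positivity
  rw [sieveSum_false_eq_one_sub_sum, sieveProduct_eq_one_sub_sum]
  linarith

/-- Only the primes `p < E ^ (1/31)` enter the upper sieve sum, and dropping the others costs
at most half of the error term. -/
theorem sieveProduct_min_le {C E : ℝ} {N : ℕ} (hC : 0 < C) (hE : 1 < E)
    (hV : ∀ n : ℕ, 2 ≤ n → sieveProduct 0 n ≤ C / log n)
    (hN : ∀ p : ℕ, (p : ℝ) ^ 31 < E ↔ p < N) (n : ℕ) :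
    sieveProduct 0 (min n N) ≤
      sieveProduct 0 n + 1 / 2 * fundamentalError (2 * (31 * C) ^ 10) n E := by
  have hVn := sieveProduct_pos 0 n
  have hL : 0 < log E := log_pos hE
  rcases le_total n N with hnN | hNn
  · rw [min_eq_left hnN, le_add_iff_nonneg_right]
    unfold fundamentalError
    positivity
  have hNE : E ≤ (N : ℝ) ^ 31 := not_lt.1 fun h ↦ lt_irrefl N ((hN N).1 h)
  have hN2 : 2 ≤ N := (hN 1).1 (by simpa using hE)
  have hlogN : log E ≤ 31 * log N := by
    have := log_le_log (by linarith) hNE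
    rwa [log_pow, Nat.cast_ofNat] at this
  have hVN : sieveProduct 0 N ≤ 31 * C / log E := by
    refine (hV N hN2).trans ?_
    rw [div_le_div_iff₀ (by linarith) hL]
    nlinarith
  have hVnL : sieveProduct 0 n ≤ 31 * C / log E := (sieveProduct_antitone 0 hNn).trans hVN
  have hpow : (log E / (31 * C)) ^ 9 ≤ (sieveProduct 0 n)⁻¹ ^ 9 := by
    refine pow_le_pow_left₀ (by positivity) ?_ 9
    rwa [le_inv_comm₀ (by positivity) hVn, inv_div]
  rw [min_eq_right hNn]
  calc sieveProduct 0 N ≤ 31 * C / log E := hVN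
    _ = 1 / 2 * (2 * (31 * C) ^ 10 * (log E / (31 * C)) ^ 9 / log E ^ 10) := by field_simp
    _ ≤ 1 / 2 * fundamentalError (2 * (31 * C) ^ 10) n E := by
      unfold fundamentalError
      gcongr
    _ ≤ sieveProduct 0 n + 1 / 2 * fundamentalError (2 * (31 * C) ^ 10) n E := by linarith

theorem sieveSum_true_le_sieveProduct_add_fundamentalError {K E : ℝ} {n N : ℕ} (hK : 0 ≤ K)
    (hE : 1 < E) (hN : ∀ p : ℕ, (p : ℝ) ^ 31 < E ↔ p < N)
    (hmin : sieveProduct 0 (min n N) ≤ sieveProduct 0 n + 1 / 2 * fundamentalError K n E)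
    (hlower : ∀ p < n, ∀ E', 1 < E' → (p : ℝ) ^ 30 ≤ E' →
      sieveProduct 0 p - fundamentalError K p E' ≤ sieveSum 0 30 p false E') :
    sieveSum 0 30 n true E ≤ sieveProduct 0 n + fundamentalError K n E := by
  set s := {p ∈ Finset.Ico 0 (min n N) | p.Prime} with hs
  have hmem : ∀ p ∈ s, p.Prime ∧ p < n ∧ (p : ℝ) ^ 31 < E := fun p hp ↦ by
    simp only [hs, Finset.mem_filter, Finset.mem_Ico, lt_min_iff, ← hN] at hp
    exact ⟨hp.2, hp.1.2⟩
  have hpow : ∀ p ∈ s, 1 < (p : ℝ) ∧ (p : ℝ) ^ 30 * p < E := fun p hp ↦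
    ⟨by exact_mod_cast (hmem p hp).1.one_lt, by simpa only [← pow_succ] using (hmem p hp).2.2⟩
  have hsum : ∑ p ∈ s, 1 / (p : ℝ) * sieveProduct 0 p -
      ∑ p ∈ s, 1 / (p : ℝ) * fundamentalError K p (E / p) ≤
        ∑ p ∈ s, 1 / (p : ℝ) * sieveSum 0 30 p false (E / p) := by
    rw [← Finset.sum_sub_distrib]
    refine Finset.sum_le_sum fun p hp ↦ ?_
    obtain ⟨hp1, hpE⟩ := hpow p hp
    have hEp : (p : ℝ) ^ 30 < E / p := (lt_div_iff₀ (by linarith)).2 hpE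
    rw [← mul_sub]
    gcongr
    exact hlower p (hmem p hp).2.1 _ ((one_lt_pow₀ hp1 (by norm_num)).trans hEp) hEp.le
  have herror : ∑ p ∈ s, 1 / (p : ℝ) * fundamentalError K p (E / p) ≤
      1 / 2 * fundamentalError K n E := by
    refine sum_one_div_mul_fundamentalError_le hK hE ?_ fun p hp ↦ ?_
    · exact Finset.filter_subset_filter _ (Finset.Ico_subset_Ico_right (min_le_left n N))
    · obtain ⟨hp1, hpE⟩ := hpow p hp
      exact le_trans (le_mul_of_one_le_right (by positivity) hp1.le) hpE.le
  rw [sieveSum_true_eq_one_sub_sum hN, ← hs]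
  have hprod := sieveProduct_eq_one_sub_sum 0 (min n N)
  rw [← hs] at hprod
  linarith

theorem exists_sieveSum_fundamental_lemma :
    ∃ K : ℝ, 0 < K ∧ ∀ (n : ℕ) (E : ℝ), 1 < E →
      sieveSum 0 30 n true E ≤ sieveProduct 0 n + fundamentalError K n E ∧
      ((n : ℝ) ^ 30 ≤ E →
        sieveProduct 0 n - fundamentalError K n E ≤ sieveSum 0 30 n false E) := by
  obtain ⟨_, C, _, hC, hV⟩ := exists_sieveProduct_bounds
  have hK : 0 < 2 * (31 * C) ^ 10 := by positivity
  refine ⟨2 * (31 * C) ^ 10, hK, fun n ↦ ?_⟩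
  induction n using Nat.strong_induction_on with
  | _ n ih =>
    intro E hE
    obtain ⟨N, hN⟩ := exists_nat_pow_lt_iff_lt (k := 31) (by norm_num) (zero_le_one.trans hE.le)
    exact ⟨sieveSum_true_le_sieveProduct_add_fundamentalError hK.le hE hN
        (sieveProduct_min_le hC hE (fun n hn ↦ (hV n hn).2) hN n)
        fun p hp E' hE' ↦ (ih p hp E' hE').2,
      fun hn ↦ sieveProduct_sub_fundamentalError_le hK.le hE hn
        fun p hp E' hE' ↦ (ih p hp E' hE').1⟩

end FundamentalLemma

section SieveWeight

/-- The truncation condition on the decreasing list `p₁ > ⋯ > p_r` of prime factors in the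
definition of `sieveWeight`. -/
def IsTruncated (β : ℕ) (b : Bool) (lvl : ℝ) (L : List ℕ) : Prop :=
  ∀ m : ℕ, 1 ≤ m → m ≤ L.length → (if b then Odd m else Even m) →
    (((L.take m).prod : ℕ) : ℝ) * ((L.getD (m - 1) 1 : ℕ) : ℝ) ^ β < lvl

theorem isTruncated_nil (β : ℕ) (b : Bool) (lvl : ℝ) : IsTruncated β b lvl [] := by
  intro m h₁ h₂
  simp only [List.length_nil] at h₂
  omega

theorem isTruncated_cons {β n : ℕ} {b : Bool} {lvl : ℝ} {L : List ℕ} (hn : 0 < n) :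
    IsTruncated β b lvl (n :: L) ↔
      (b = true → (n : ℝ) ^ (β + 1) < lvl) ∧ IsTruncated β (!b) (lvl / n) L := by
  have hn' : (0 : ℝ) < n := by exact_mod_cast hn
  have hparity (m : ℕ) : (if b then Odd (m + 1) else Even (m + 1)) ↔
      if !b then Odd m else Even m := by
    cases b <;> simp [Nat.even_add_one, Nat.odd_add_one]
  have hstep (m : ℕ) : (((n :: L).take (m + 2)).prod : ℕ) * (((n :: L).getD (m + 1) 1 : ℕ) : ℝ) ^ β
      < lvl ↔ ((L.take (m + 1)).prod : ℕ) * ((L.getD m 1 : ℕ) : ℝ) ^ β < lvl / n := by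
    rw [lt_div_iff₀ hn', List.take_succ_cons, List.prod_cons, List.getD_cons_succ, Nat.cast_mul,
      mul_comm, mul_right_comm, mul_comm, mul_comm (n : ℝ)]
  constructor
  · refine fun h ↦ ⟨fun hb ↦ ?_, fun m h₁ h₂ hm ↦ ?_⟩
    · simpa [hb, pow_succ'] using h 1 le_rfl
    · obtain ⟨j, rfl⟩ := Nat.exists_eq_add_of_le' h₁
      exact (hstep j).1 (h (j + 2) (by omega) (by simpa using h₂) ((hparity _).2 hm))
  · rintro ⟨hhead, htail⟩ m h₁ h₂ hm
    obtain ⟨j, rfl⟩ := Nat.exists_eq_add_of_le' h₁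
    rcases j with _ | j
    · have hb : b = true := by by_contra hb; simp [hb] at hm
      simpa [pow_succ'] using hhead hb
    · exact (hstep j).2 (htail (j + 1) (by omega) (by simpa using h₂) ((hparity _).1 hm))

theorem reverse_primeFactorsList_prime_mul {n d : ℕ} (hn : n.Prime) (hd : d ≠ 0)
    (h : ∀ p ∈ d.primeFactors, p < n) :
    (n * d).primeFactorsList.reverse = n :: d.primeFactorsList.reverse := by
  have happend : (n * d).primeFactorsList = d.primeFactorsList ++ [n] := by
    refine List.Perm.eq_of_pairwise (le := (· ≤ ·)) (fun a b _ _ ↦ le_antisymm)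
      (Nat.primeFactorsList_sorted _).pairwise ?_ ?_
    · refine List.pairwise_append.2
        ⟨(Nat.primeFactorsList_sorted _).pairwise, List.pairwise_singleton _ _, fun p hp q hq ↦ ?_⟩
      rw [List.mem_singleton.1 hq]
      exact (h p (List.mem_toFinset.2 hp)).le
    · refine (Nat.perm_primeFactorsList_mul hn.ne_zero hd).trans ?_
      rw [Nat.primeFactorsList_prime hn]
      exact List.perm_append_comm
  rw [happend, List.reverse_append, List.reverse_singleton, List.singleton_append]

theorem sieveWeight_eq (lo hi lvl : ℝ) (β : ℕ) (b : Bool) (d : ℕ) :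
    sieveWeight lo hi lvl β b d = if Squarefree d ∧
      (∀ p ∈ d.primeFactors, lo ≤ (p : ℝ) ∧ (p : ℝ) < hi) ∧
        IsTruncated β b lvl d.primeFactorsList.reverse
      then (ArithmeticFunction.moebius d : ℝ) else 0 := by
  unfold sieveWeight IsTruncated
  simp only [List.length_reverse]

theorem sieveWeight_one (lo hi lvl : ℝ) (β : ℕ) (b : Bool) : sieveWeight lo hi lvl β b 1 = 1 := by
  rw [sieveWeight_eq, if_pos]
  · simp
  · simpa using isTruncated_nil β b lvl

theorem sieveWeight_prime_mul {lo hi : ℝ} (lvl : ℝ) (β : ℕ) (b : Bool) {n d : ℕ} (hn : n.Prime)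
    (hlo : lo ≤ n) (hhi : n < hi) (hd : Squarefree d) (h : ∀ p ∈ d.primeFactors, p < n) :
    sieveWeight lo hi lvl β b (n * d) =
      if b = true → (n : ℝ) ^ (β + 1) < lvl then -sieveWeight lo hi (lvl / n) β (!b) d else 0 := by
  have hcoprime : n.Coprime d := hn.coprime_iff_not_dvd.2 fun hdvd ↦
    lt_irrefl _ (h n (Nat.mem_primeFactors.2 ⟨hn, hdvd, hd.ne_zero⟩))
  have hsq : Squarefree (n * d) := (Nat.squarefree_mul hcoprime).2 ⟨hn.squarefree, hd⟩
  have hfactors : (n * d).primeFactors = insert n d.primeFactors := by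
    rw [Nat.primeFactors_mul hn.ne_zero hd.ne_zero, hn.primeFactors, Finset.insert_eq]
  have hmoebius : (ArithmeticFunction.moebius (n * d) : ℝ) = -ArithmeticFunction.moebius d := by
    rw [ArithmeticFunction.isMultiplicative_moebius.map_mul_of_coprime hcoprime,
      ArithmeticFunction.moebius_apply_prime hn]
    push_cast
    ring
  rw [sieveWeight_eq, sieveWeight_eq, reverse_primeFactorsList_prime_mul hn hd.ne_zero h,
    isTruncated_cons hn.pos, hfactors, hmoebius]
  simp only [Finset.forall_mem_insert, hsq, hd, hlo, hhi, true_and]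
  split_ifs <;> first | rfl | exact neg_zero.symm | tauto

end SieveWeight

section PrimorialSum

theorem prime_of_mem_powerset_filter {s t : Finset ℕ} (ht : t ∈ {p ∈ s | p.Prime}.powerset) :
    ∀ p ∈ t, p.Prime := fun _ hp ↦
  (Finset.mem_filter.1 (Finset.mem_powerset.1 ht hp)).2

theorem squarefree_prod_of_forall_prime {t : Finset ℕ} (ht : ∀ p ∈ t, p.Prime) :
    Squarefree (∏ p ∈ t, p) :=
  Finset.squarefree_prod_of_pairwise_isCoprime
    (fun p hp q hq hpq ↦
      Nat.coprime_iff_isRelPrime.1 ((Nat.coprime_primes (ht p hp) (ht q hq)).2 hpq))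
    fun p hp ↦ (ht p hp).squarefree

theorem sum_sieveWeight_div_eq_sieveSum (lo : ℝ) {hi : ℝ} (lvl : ℝ) (β : ℕ) (b : Bool) {n : ℕ}
    (hn : n ≤ ⌈hi⌉₊) :
    ∑ t ∈ {p ∈ Finset.Ico ⌈lo⌉₊ n | p.Prime}.powerset,
      sieveWeight lo hi lvl β b (∏ p ∈ t, p) / ((∏ p ∈ t, p : ℕ) : ℝ) =
        sieveSum ⌈lo⌉₊ β n b lvl := by
  induction n generalizing b lvl with
  | zero => simp [sieveSum, sieveWeight_one]
  | succ n ih =>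
    rw [filter_prime_Ico_succ, sieveSum]
    by_cases hp : n.Prime ∧ ⌈lo⌉₊ ≤ n
    swap
    · rw [if_neg hp, ih _ _ (by omega), if_neg fun h ↦ hp ⟨h.1, h.2.1⟩, sub_zero]
    have hinsert : ∀ t ∈ {p ∈ Finset.Ico ⌈lo⌉₊ n | p.Prime}.powerset,
        sieveWeight lo hi lvl β b (∏ p ∈ insert n t, p) / ((∏ p ∈ insert n t, p : ℕ) : ℝ) =
          if b = true → (n : ℝ) ^ (β + 1) < lvl then
            -(1 / (n : ℝ)) * (sieveWeight lo hi (lvl / n) β (!b) (∏ p ∈ t, p) /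
              ((∏ p ∈ t, p : ℕ) : ℝ)) else 0 := by
      intro t ht
      have hprime := prime_of_mem_powerset_filter ht
      have hlt : ∀ p ∈ t, p < n := fun p hp ↦
        (Finset.mem_Ico.1 (Finset.mem_filter.1 (Finset.mem_powerset.1 ht hp)).1).2
      rw [Finset.prod_insert fun h ↦ lt_irrefl n (hlt n h),
        sieveWeight_prime_mul lvl β b hp.1 (Nat.ceil_le.1 hp.2) (Nat.lt_ceil.1 (by omega))
          (squarefree_prod_of_forall_prime hprime) (by rwa [Nat.primeFactors_prod hprime])]
      split_ifs
      · rw [Nat.cast_mul, neg_div, neg_mul, div_mul_div_comm, one_mul]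
      · exact zero_div _
    rw [if_pos hp, Finset.sum_powerset_insert (by simp), ih _ _ (by omega),
      Finset.sum_congr rfl hinsert, sub_eq_add_neg]
    simp only [hp.1, hp.2, true_and]
    split_ifs
    · rw [← Finset.mul_sum, ih _ _ (by omega), neg_mul]
    · simp

theorem sum_powerset_union_of_disjoint {α M : Type*} [DecidableEq α] [AddCommMonoid M]
    {s t : Finset α} (hst : Disjoint s t) (f : Finset α → M) :
    ∑ u ∈ (s ∪ t).powerset, f u = ∑ a ∈ s.powerset, ∑ b ∈ t.powerset, f (a ∪ b) := by
  induction s using Finset.induction_on generalizing f with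
  | empty => simp
  | insert x s hx ih =>
    obtain ⟨hxt, hst⟩ := Finset.disjoint_insert_left.1 hst
    rw [Finset.insert_union, Finset.sum_powerset_insert (by simp [hx, hxt]),
      Finset.sum_powerset_insert hx, ih hst, ih hst]
    simp only [Finset.insert_union]

theorem hasSum_of_dividesPrimorial {z : ℝ} {f : ℕ → ℝ}
    (hf : ∀ k, ¬dividesPrimorial z k → f k = 0) :
    HasSum f (∑ t ∈ {p ∈ Finset.Ico 0 ⌈z⌉₊ | p.Prime}.powerset, f (∏ p ∈ t, p)) := by
  have hinj : Set.InjOn (fun t : Finset ℕ ↦ ∏ p ∈ t, p)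
      ({p ∈ Finset.Ico 0 ⌈z⌉₊ | p.Prime}.powerset : Set (Finset ℕ)) := by
    intro s hs t ht h
    rw [← Nat.primeFactors_prod (prime_of_mem_powerset_filter hs),
      ← Nat.primeFactors_prod (prime_of_mem_powerset_filter ht)]
    exact congrArg Nat.primeFactors h
  rw [← Finset.sum_image (f := f) hinj]
  refine hasSum_sum_of_ne_finset_zero fun k hk ↦ hf k fun hdvd ↦ hk (Finset.mem_image.2
    ⟨k.primeFactors, Finset.mem_powerset.2 fun p hp ↦ ?_,
      Nat.prod_primeFactors_of_squarefree hdvd.1⟩)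
  exact Finset.mem_filter.2 ⟨Finset.mem_Ico.2 ⟨p.zero_le, Nat.lt_ceil.2 (hdvd.2 p hp)⟩,
    Nat.prime_of_mem_primeFactors hp⟩

end PrimorialSum

section VectorSieve

theorem gcdPart_prod (lo hi : ℝ) {t : Finset ℕ} (ht : ∀ p ∈ t, p.Prime) :
    gcdPart lo hi (∏ p ∈ t, p) = ∏ p ∈ t with lo ≤ ((p : ℕ) : ℝ) ∧ (p : ℝ) < hi, p := by
  rw [gcdPart, Nat.primeFactors_prod ht]

theorem dividesPrimorial_prod {z : ℝ} {t : Finset ℕ} (ht : ∀ p ∈ t, p.Prime)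
    (hz : ∀ p ∈ t, (p : ℝ) < z) : dividesPrimorial z (∏ p ∈ t, p) :=
  ⟨squarefree_prod_of_forall_prime ht, by rwa [Nat.primeFactors_prod ht]⟩

/-- The weight `1_{k ∣ P(z)} λ_{(k, P(w, z))} ρ_{(k, P(w))}`, the product of a linear sieve weight
of level `D` and a β-sieve weight of level `E`; `alphaMinus` and `alphaPlusLevel` are combinations
of such weights. -/
noncomputable def vectorWeight (w z D E : ℝ) (b b' : Bool) (k : ℕ) : ℝ :=
  (if dividesPrimorial z k then 1 else 0) *
    (sieveWeight w z D 2 b (gcdPart w z k) * sieveWeight 0 w E 30 b' (gcdPart 0 w k))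

theorem vectorWeight_eq_zero {w z D E : ℝ} {b b' : Bool} {k : ℕ} (hk : ¬dividesPrimorial z k) :
    vectorWeight w z D E b b' k = 0 := by
  rw [vectorWeight, if_neg hk, zero_mul]

theorem vectorWeight_prod_union {w z : ℝ} (D E : ℝ) (b b' : Bool) (hwz : w ≤ z) {s t : Finset ℕ}
    (hs : s ∈ {p ∈ Finset.Ico 0 ⌈w⌉₊ | p.Prime}.powerset)
    (ht : t ∈ {p ∈ Finset.Ico ⌈w⌉₊ ⌈z⌉₊ | p.Prime}.powerset) :
    vectorWeight w z D E b b' (∏ p ∈ s ∪ t, p) / ((∏ p ∈ s ∪ t, p : ℕ) : ℝ) =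
      sieveWeight 0 w E 30 b' (∏ p ∈ s, p) / ((∏ p ∈ s, p : ℕ) : ℝ) *
        (sieveWeight w z D 2 b (∏ p ∈ t, p) / ((∏ p ∈ t, p : ℕ) : ℝ)) := by
  have hsw : ∀ p ∈ s, (p : ℝ) < w := fun p hp ↦ Nat.lt_ceil.1
    (Finset.mem_Ico.1 (Finset.mem_filter.1 (Finset.mem_powerset.1 hs hp)).1).2
  have htwz : ∀ p ∈ t, w ≤ (p : ℝ) ∧ (p : ℝ) < z := fun p hp ↦ by
    have hmem := Finset.mem_Ico.1 (Finset.mem_filter.1 (Finset.mem_powerset.1 ht hp)).1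
    exact ⟨Nat.ceil_le.1 hmem.1, Nat.lt_ceil.1 hmem.2⟩
  have hprime : ∀ p ∈ s ∪ t, p.Prime := fun p hp ↦ (Finset.mem_union.1 hp).elim
    (prime_of_mem_powerset_filter hs p) (prime_of_mem_powerset_filter ht p)
  have hlt : ∀ p ∈ s ∪ t, (p : ℝ) < z := fun p hp ↦ (Finset.mem_union.1 hp).elim
    (fun h ↦ (hsw p h).trans_le hwz) fun h ↦ (htwz p h).2
  have hdisj : Disjoint s t := Finset.disjoint_left.2 fun p hps hpt ↦
    (hsw p hps).not_ge (htwz p hpt).1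
  have hlower : {p ∈ s ∪ t | 0 ≤ ((p : ℕ) : ℝ) ∧ (p : ℝ) < w} = s := by
    rw [Finset.filter_union, Finset.filter_true_of_mem fun p hp ↦ ⟨p.cast_nonneg, hsw p hp⟩,
      Finset.filter_false_of_mem fun p hp h ↦ h.2.not_ge (htwz p hp).1, Finset.union_empty]
  have hupper : {p ∈ s ∪ t | w ≤ ((p : ℕ) : ℝ) ∧ (p : ℝ) < z} = t := by
    rw [Finset.filter_union, Finset.filter_true_of_mem htwz,
      Finset.filter_false_of_mem fun p hp h ↦ h.1.not_gt (hsw p hp), Finset.empty_union]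
  rw [vectorWeight, if_pos (dividesPrimorial_prod hprime hlt), one_mul, gcdPart_prod w z hprime,
    gcdPart_prod 0 w hprime, hlower, hupper, Finset.prod_union hdisj, Nat.cast_mul,
    mul_comm (sieveWeight w z _ _ _ _), div_mul_div_comm]

theorem hasSum_vectorWeight_div {w z : ℝ} (D E : ℝ) (b b' : Bool) (hwz : w ≤ z) :
    HasSum (fun k : ℕ ↦ vectorWeight w z D E b b' k / k)
      (sieveSum ⌈w⌉₊ 2 ⌈z⌉₊ b D * sieveSum 0 30 ⌈w⌉₊ b' E) := by
  have hunion : {p ∈ Finset.Ico 0 ⌈z⌉₊ | p.Prime} =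
      {p ∈ Finset.Ico 0 ⌈w⌉₊ | p.Prime} ∪ {p ∈ Finset.Ico ⌈w⌉₊ ⌈z⌉₊ | p.Prime} := by
    rw [← Finset.filter_union,
      Finset.Ico_union_Ico_eq_Ico (Nat.zero_le _) (Nat.ceil_le_ceil hwz)]
  have hdisj : Disjoint {p ∈ Finset.Ico 0 ⌈w⌉₊ | p.Prime} {p ∈ Finset.Ico ⌈w⌉₊ ⌈z⌉₊ | p.Prime} :=
    Finset.disjoint_filter_filter (Finset.Ico_disjoint_Ico_consecutive _ _ _)
  have hlower := sum_sieveWeight_div_eq_sieveSum 0 E 30 b' (le_refl ⌈w⌉₊)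
  rw [Nat.ceil_zero] at hlower
  convert hasSum_of_dividesPrimorial (z := z) (f := fun k ↦ vectorWeight w z D E b b' k / k)
    fun k hk ↦ by rw [vectorWeight_eq_zero hk, zero_div] using 1
  rw [hunion, sum_powerset_union_of_disjoint hdisj, mul_comm, ← hlower,
    ← sum_sieveWeight_div_eq_sieveSum w D 2 b (le_refl ⌈z⌉₊), Finset.sum_mul_sum]
  refine Eq.symm ?_
  exact Finset.sum_congr rfl fun s hs ↦ Finset.sum_congr rfl fun t ht ↦
    vectorWeight_prod_union D E b b' hwz hs ht

theorem tsum_alphaMinus_div {w z : ℝ} (D E : ℝ) (hwz : w ≤ z) :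
    ∑' k : ℕ, alphaMinus w z D E k / k =
      sieveSum ⌈w⌉₊ 2 ⌈z⌉₊ true D * sieveSum 0 30 ⌈w⌉₊ false E +
        sieveSum ⌈w⌉₊ 2 ⌈z⌉₊ false D * sieveSum 0 30 ⌈w⌉₊ true E -
          sieveSum ⌈w⌉₊ 2 ⌈z⌉₊ true D * sieveSum 0 30 ⌈w⌉₊ true E := by
  have hsum := hasSum_vectorWeight_div D E (hwz := hwz)
  rw [← (((hsum true false).add (hsum false true)).sub (hsum true true)).tsum_eq]
  refine tsum_congr fun k ↦ ?_
  unfold alphaMinus vectorWeight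
  ring

theorem tsum_alphaPlusLevel_div {w z : ℝ} (D E x : ℝ) (hwz : w ≤ z) :
    ∑' k : ℕ, alphaPlusLevel w z D E k / (k * x) =
      sieveSum ⌈w⌉₊ 2 ⌈z⌉₊ true D * sieveSum 0 30 ⌈w⌉₊ true E / x := by
  rw [← (hasSum_vectorWeight_div D E _ _ hwz).tsum_eq, div_eq_mul_inv, ← tsum_mul_right]
  refine tsum_congr fun k ↦ ?_
  rw [alphaPlusLevel, vectorWeight, div_mul_eq_div_div, div_eq_mul_inv _ x, mul_assoc (ite _ _ _)]

/-- The logarithmic partition of unity `σ(x) = ψ(x) - ψ(x / √2)` that resolves the sum over primes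
into ranges of bounded ratio. -/
noncomputable def partitionWeight (ψ : ℝ → ℝ) (x : ℝ) : ℝ :=
  ψ x - ψ (x / Real.sqrt 2)

/-- The sum subtracted in Richert's weighted sieve, with `Λ a` in the place of the sieve sum of
level `D_a`. -/
noncomputable def richertWeightedSum (z y : ℝ) (ψ : ℝ → ℝ) (Λ : ℕ → ℝ) : ℝ :=
  ∑ a ∈ Finset.Icc (⌊Real.log z / Real.log (Real.sqrt 2)⌋₊ - 2)
      ⌊Real.log y / Real.log (Real.sqrt 2)⌋₊,
    ∑' p : ℕ, if p.Prime then
      partitionWeight ψ (p / Real.sqrt 2 ^ a) * (1 - Real.log p / Real.log y) * (Λ a / p) else 0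

theorem richertMainTerm_eq {w z : ℝ} (y D E : ℝ) (ψ : ℝ → ℝ) (hwz : w ≤ z) :
    richertMainTerm w z y D E ψ =
      sieveSum 0 30 ⌈w⌉₊ true E * (sieveSum ⌈w⌉₊ 2 ⌈z⌉₊ false D -
        richertWeightedSum z y ψ fun a ↦ sieveSum ⌈w⌉₊ 2 ⌈z⌉₊ true (D / Real.sqrt 2 ^ (a + 2))) -
      sieveSum ⌈w⌉₊ 2 ⌈z⌉₊ true D * (sieveSum 0 30 ⌈w⌉₊ true E - sieveSum 0 30 ⌈w⌉₊ false E) := by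
  have hmul (c : ℝ) (Λ : ℕ → ℝ) :
      richertWeightedSum z y ψ (fun a ↦ Λ a * c) = c * richertWeightedSum z y ψ Λ := by
    unfold richertWeightedSum
    rw [Finset.mul_sum]
    refine Finset.sum_congr rfl fun a _ ↦ ?_
    rw [← tsum_mul_left]
    refine tsum_congr fun p ↦ ?_
    split_ifs <;> ring
  rw [mul_sub, ← hmul, richertMainTerm, tsum_alphaMinus_div D E hwz]
  simp only [tsum_alphaPlusLevel_div _ E _ hwz, richertWeightedSum, partitionWeight]
  ring

end VectorSieve

section SieveFunctions

open MeasureTheory Set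

/-- The Picard iterates of the delay system defining the sieve functions. In each iterate `max s 1`
and `max s 2` extend the formulas, which are only meaningful for `s ≥ 1`, to the whole line. -/
noncomputable def delayIterate : ℕ → (ℝ → ℝ) × (ℝ → ℝ)
  | 0 => (fun s ↦ 1 / max s 1, fun _ ↦ 0)
  | n + 1 => (fun s ↦ (1 + ∫ t in (2 : ℝ)..(s - 1), (delayIterate n).2 t) / max s 1,
      fun s ↦ (∫ t in (1 : ℝ)..(max s 2 - 1), (delayIterate n).1 t) / max s 1)

/-- The upper function `F` of the linear sieve, normalized so that `s * F s = 1` for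
`1 ≤ s ≤ 3` (the classical normalization is `2 * exp γ` there): the stationary value of the
iteration `delayIterate` at `s`. -/
noncomputable def upperSieveFun (s : ℝ) : ℝ := (delayIterate ⌈s⌉₊).1 s

/-- The lower function `f` of the linear sieve, in the normalization of `upperSieveFun`. -/
noncomputable def lowerSieveFun (s : ℝ) : ℝ := (delayIterate ⌈s⌉₊).2 s

/-- The function `s ↦ s * F s` for `s ≥ 1`, through the integral equation that it satisfies. -/
noncomputable def upperSieveIntegral (s : ℝ) : ℝ := 1 + ∫ t in (2 : ℝ)..(s - 1), lowerSieveFun t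

/-- The function `s ↦ s * f s` for `s ≥ 1`, through the integral equation that it satisfies. -/
noncomputable def lowerSieveIntegral (s : ℝ) : ℝ := ∫ t in (1 : ℝ)..(max s 2 - 1), upperSieveFun t

theorem max_one_ne_zero (s : ℝ) : max s 1 ≠ 0 :=
  (lt_max_of_lt_right one_pos).ne'

theorem continuous_delayIterate (n : ℕ) :
    Continuous (delayIterate n).1 ∧ Continuous (delayIterate n).2 := by
  induction n with
  | zero => exact ⟨continuous_const.div (continuous_id.max continuous_const) max_one_ne_zero,
      continuous_const⟩
  | succ n ih =>
    have hprim {g : ℝ → ℝ} (hg : Continuous g) (a : ℝ) : Continuous fun x ↦ ∫ t in a..x, g t :=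
      intervalIntegral.continuous_primitive (fun _ _ ↦ hg.intervalIntegrable _ _) a
    have hmax : Continuous fun s : ℝ ↦ max s 1 := continuous_id.max continuous_const
    exact ⟨(continuous_const.add ((hprim ih.2 2).comp (continuous_id.sub continuous_const))).div
        hmax max_one_ne_zero,
      ((hprim ih.1 1).comp ((continuous_id.max continuous_const).sub continuous_const)).div
        hmax max_one_ne_zero⟩

theorem integral_congr_of_forall_le {g h : ℝ → ℝ} {a b c : ℝ} (ha : a ≤ c) (hb : b ≤ c)
    (hgh : ∀ t ≤ c, g t = h t) : ∫ t in a..b, g t = ∫ t in a..b, h t :=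
  intervalIntegral.integral_congr fun t ht ↦ hgh t (ht.2.trans (max_le ha hb))

theorem delayIterate_succ_eq (n : ℕ) : ∀ s : ℝ, s ≤ n + 2 →
    (delayIterate (n + 1)).1 s = (delayIterate n).1 s ∧
      (delayIterate (n + 1)).2 s = (delayIterate n).2 s := by
  induction n with
  | zero =>
    intro s hs
    have hs2 : max s 2 = 2 := max_eq_right (by simpa using hs)
    constructor
    · simp [delayIterate]
    · norm_num [delayIterate, hs2]
  | succ n ih =>
    intro s hs
    push_cast at hs
    have _hn : (0 : ℝ) ≤ n := n.cast_nonneg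
    have hmax : max s 2 ≤ n + 3 := max_le (by linarith) (by linarith)
    constructor
    · rw [delayIterate, delayIterate]
      exact congrArg (fun I ↦ (1 + I) / max s 1) (integral_congr_of_forall_le (c := n + 2)
        (by linarith) (by linarith) fun t ht ↦ (ih t ht).2)
    · rw [delayIterate, delayIterate]
      exact congrArg (· / max s 1) (integral_congr_of_forall_le (c := n + 2)
        (by linarith) (by linarith) fun t ht ↦ (ih t ht).1)

theorem delayIterate_eq_of_le {m n : ℕ} (hmn : m ≤ n) {s : ℝ} (hs : s ≤ m + 2) :
    (delayIterate n).1 s = (delayIterate m).1 s ∧ (delayIterate n).2 s = (delayIterate m).2 s := by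
  induction n, hmn using Nat.le_induction with
  | base => exact ⟨rfl, rfl⟩
  | succ n hmn ih =>
    have hstep := delayIterate_succ_eq n s (hs.trans (by gcongr))
    exact ⟨hstep.1.trans ih.1, hstep.2.trans ih.2⟩

theorem sieveFun_eq_delayIterate {n : ℕ} {s : ℝ} (hs : s ≤ n + 2) :
    upperSieveFun s = (delayIterate n).1 s ∧ lowerSieveFun s = (delayIterate n).2 s := by
  rcases le_total n ⌈s⌉₊ with h | h
  · exact delayIterate_eq_of_le h hs
  · have heq := delayIterate_eq_of_le h (s := s) (by linarith [Nat.le_ceil s])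
    exact ⟨heq.1.symm, heq.2.symm⟩

theorem continuous_of_forall_eventuallyEq_nat {g : ℝ → ℝ} {h : ℕ → ℝ → ℝ}
    (hh : ∀ n, Continuous (h n)) (hgh : ∀ (n : ℕ) (s : ℝ), s < n → g s = h n s) :
    Continuous g := by
  refine continuous_iff_continuousAt.2 fun s ↦ ?_
  obtain ⟨n, hn⟩ := exists_nat_gt s
  refine (hh n).continuousAt.congr ?_
  filter_upwards [Iio_mem_nhds hn] with x hx using (hgh n x hx).symm

theorem continuous_upperSieveFun : Continuous upperSieveFun :=
  continuous_of_forall_eventuallyEq_nat (fun n ↦ (continuous_delayIterate n).1)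
    fun _ _ hs ↦ (sieveFun_eq_delayIterate (by linarith)).1

theorem continuous_lowerSieveFun : Continuous lowerSieveFun :=
  continuous_of_forall_eventuallyEq_nat (fun n ↦ (continuous_delayIterate n).2)
    fun _ _ hs ↦ (sieveFun_eq_delayIterate (by linarith)).2

theorem upperSieveFun_eq_div {s : ℝ} (hs : 1 ≤ s) : upperSieveFun s = upperSieveIntegral s / s := by
  obtain ⟨n, hn⟩ := exists_nat_gt s
  rw [(sieveFun_eq_delayIterate (n := n + 1) (by push_cast; linarith)).1, delayIterate,
    upperSieveIntegral, integral_congr_of_forall_le (c := (n : ℝ) + 2) (by linarith)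
      (by linarith) fun t ht ↦ (sieveFun_eq_delayIterate ht).2]
  simp only [max_eq_left hs]

theorem lowerSieveFun_eq_div_max (s : ℝ) : lowerSieveFun s = lowerSieveIntegral s / max s 1 := by
  obtain ⟨n, hn⟩ := exists_nat_gt s
  have _hn0 : (0 : ℝ) ≤ n := n.cast_nonneg
  have hmax : max s 2 ≤ n + 2 := max_le (by linarith) (by linarith)
  rw [(sieveFun_eq_delayIterate (n := n + 1) (by push_cast; linarith)).2, delayIterate,
    lowerSieveIntegral, integral_congr_of_forall_le (c := (n : ℝ) + 2) (by linarith)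
      (by linarith) fun t ht ↦ (sieveFun_eq_delayIterate ht).1]

theorem lowerSieveFun_eq_div {s : ℝ} (hs : 1 ≤ s) :
    lowerSieveFun s = lowerSieveIntegral s / s := by
  rw [lowerSieveFun_eq_div_max, max_eq_left hs]

theorem lowerSieveIntegral_eq_zero {s : ℝ} (hs : s ≤ 2) : lowerSieveIntegral s = 0 := by
  rw [lowerSieveIntegral, max_eq_right hs]
  norm_num

theorem lowerSieveFun_eq_zero {s : ℝ} (hs : s ≤ 2) : lowerSieveFun s = 0 := by
  rw [lowerSieveFun_eq_div_max, lowerSieveIntegral_eq_zero hs, zero_div]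

theorem upperSieveIntegral_eq_one {s : ℝ} (hs : s ≤ 3) : upperSieveIntegral s = 1 := by
  rw [upperSieveIntegral, integral_congr_of_forall_le (h := fun _ ↦ 0) le_rfl (by linarith)
    fun t ht ↦ lowerSieveFun_eq_zero ht]
  simp

theorem upperSieveFun_eq_one_div {s : ℝ} (h1 : 1 ≤ s) (h3 : s ≤ 3) : upperSieveFun s = 1 / s := by
  rw [upperSieveFun_eq_div h1, upperSieveIntegral_eq_one h3]

theorem hasDerivAt_integral_sub_one {g : ℝ → ℝ} (hg : Continuous g) (a s : ℝ) :
    HasDerivAt (fun x ↦ ∫ t in a..(x - 1), g t) (g (s - 1)) s :=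
  (hg.integral_hasStrictDerivAt a (s - 1)).hasDerivAt.comp_sub_const s 1

theorem hasDerivAt_upperSieveIntegral (s : ℝ) :
    HasDerivAt upperSieveIntegral (lowerSieveFun (s - 1)) s :=
  (hasDerivAt_integral_sub_one continuous_lowerSieveFun 2 s).const_add 1

theorem hasDerivAt_lowerSieveIntegral {s : ℝ} (hs : 2 < s) :
    HasDerivAt lowerSieveIntegral (upperSieveFun (s - 1)) s := by
  refine (hasDerivAt_integral_sub_one continuous_upperSieveFun 1 s).congr_of_eventuallyEq ?_
  filter_upwards [Ioi_mem_nhds hs] with x hx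
  rw [lowerSieveIntegral, max_eq_left (le_of_lt hx)]

theorem continuous_upperSieveIntegral : Continuous upperSieveIntegral :=
  continuous_iff_continuousAt.2 fun s ↦ (hasDerivAt_upperSieveIntegral s).continuousAt

theorem continuous_lowerSieveIntegral : Continuous lowerSieveIntegral :=
  (intervalIntegral.continuous_primitive
    (fun _ _ ↦ continuous_upperSieveFun.intervalIntegrable _ _) 1).comp
      ((continuous_id.max continuous_const).sub continuous_const)

theorem lowerSieveIntegral_eq_log {s : ℝ} (h2 : 2 ≤ s) (h4 : s ≤ 4) :
    lowerSieveIntegral s = Real.log (s - 1) := by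
  have hcongr : ∫ t in (1 : ℝ)..(s - 1), upperSieveFun t = ∫ t in (1 : ℝ)..(s - 1), 1 / t := by
    refine intervalIntegral.integral_congr fun t ht ↦ ?_
    rw [uIcc_of_le (by linarith)] at ht
    exact upperSieveFun_eq_one_div ht.1 (by linarith [ht.2])
  rw [lowerSieveIntegral, max_eq_left h2, hcongr,
    integral_one_div_of_pos one_pos (by linarith), div_one]

/-- The difference `s * (F s - f s)`, whose positivity separates the two sieve functions. -/
noncomputable def sieveGap (s : ℝ) : ℝ := upperSieveIntegral s - lowerSieveIntegral s

theorem continuous_sieveGap : Continuous sieveGap :=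
  continuous_upperSieveIntegral.sub continuous_lowerSieveIntegral

theorem sieveGap_eq_one {s : ℝ} (hs : s ≤ 2) : sieveGap s = 1 := by
  rw [sieveGap, upperSieveIntegral_eq_one (by linarith), lowerSieveIntegral_eq_zero hs, sub_zero]

theorem hasDerivAt_sieveGap {s : ℝ} (hs : 2 < s) :
    HasDerivAt sieveGap (-(sieveGap (s - 1) / (s - 1))) s := by
  refine ((hasDerivAt_upperSieveIntegral s).sub (hasDerivAt_lowerSieveIntegral hs)).congr_deriv ?_
  rw [upperSieveFun_eq_div (by linarith), lowerSieveFun_eq_div (by linarith), sieveGap]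
  ring

/-- The adjoint equation of the delay equation for `sieveGap` has the solution `s ↦ s`, which
gives this conserved quantity. -/
theorem sub_one_mul_sieveGap {s : ℝ} (hs : 2 ≤ s) :
    (s - 1) * sieveGap s = ∫ t in (s - 1)..s, sieveGap t := by
  set Φ : ℝ → ℝ := fun x ↦
    (x - 1) * sieveGap x - ((∫ t in (1 : ℝ)..x, sieveGap t) - ∫ t in (1 : ℝ)..(x - 1), sieveGap t)
    with hΦ
  have hprim : Continuous fun x ↦ ∫ t in (1 : ℝ)..x, sieveGap t :=
    intervalIntegral.continuous_primitive (fun _ _ ↦ continuous_sieveGap.intervalIntegrable _ _) 1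
  have hcont : Continuous Φ := by
    have hsub : Continuous fun x : ℝ ↦ x - 1 := continuous_id.sub continuous_const
    exact (hsub.mul continuous_sieveGap).sub (hprim.sub (hprim.comp hsub))
  have hderiv (x : ℝ) (hx : 2 < x) : HasDerivAt Φ 0 x := by
    refine ((((hasDerivAt_id x).sub_const 1).mul (hasDerivAt_sieveGap hx)).sub
      ((continuous_sieveGap.integral_hasStrictDerivAt 1 x).hasDerivAt.sub
        (hasDerivAt_integral_sub_one continuous_sieveGap 1 x))).congr_deriv ?_
    have hx1 : x - 1 ≠ 0 := by linarith
    simp only [id_eq]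
    field_simp
    ring
  have hconst : Φ s - Φ 2 = 0 := by
    simpa using (intervalIntegral.integral_eq_sub_of_hasDerivAt_of_le hs hcont.continuousOn
      (f' := fun _ ↦ 0) (fun x hx ↦ hderiv x hx.1) intervalIntegrable_const).symm
  have hΦ2 : Φ 2 = 0 := by
    have hint : ∫ t in (1 : ℝ)..2, sieveGap t = 1 := by
      rw [integral_congr_of_forall_le (h := fun _ ↦ 1) (by norm_num) le_rfl
        fun t ht ↦ sieveGap_eq_one ht]
      norm_num
    simp only [hΦ, hint, sieveGap_eq_one le_rfl]
    norm_num
  have hsplit := intervalIntegral.integral_interval_sub_left (μ := volume) (a := 1)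
    (continuous_sieveGap.intervalIntegrable 1 s) (continuous_sieveGap.intervalIntegrable 1 (s - 1))
  rw [← hsplit]
  exact sub_eq_zero.1 (by simpa only [hΦ2, sub_zero] using hconst)

/-- At the least `x ≥ a` with `g x ≤ 0` the hypothesis would be contradicted. -/
theorem pos_of_forall_Ico_pos {g : ℝ → ℝ} (hg : Continuous g) {a : ℝ}
    (h : ∀ x, a ≤ x → (∀ t ∈ Ico a x, 0 < g t) → 0 < g x) {x : ℝ} (hx : a ≤ x) : 0 < g x := by
  by_contra hneg
  have hcompact : IsCompact (Icc a x ∩ g ⁻¹' Iic 0) :=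
    isCompact_Icc.inter_right (isClosed_Iic.preimage hg)
  obtain ⟨y, ⟨⟨hay, hyx⟩, hy⟩, hmin⟩ :=
    hcompact.exists_isLeast ⟨x, ⟨hx, le_rfl⟩, not_lt.1 hneg⟩
  refine not_lt.2 hy (h y hay fun t ht ↦ ?_)
  by_contra hgt
  exact not_le.2 ht.2 (hmin ⟨⟨ht.1, ht.2.le.trans hyx⟩, not_lt.1 hgt⟩)

theorem sieveGap_pos (s : ℝ) : 0 < sieveGap s := by
  rcases le_total s 2 with hs | hs
  · simp [sieveGap_eq_one hs]
  refine pos_of_forall_Ico_pos continuous_sieveGap (fun x hx hpos ↦ ?_) hs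
  have hint : 0 < ∫ t in (x - 1)..x, sieveGap t := by
    refine intervalIntegral.intervalIntegral_pos_of_pos_on
      (continuous_sieveGap.intervalIntegrable _ _) (fun t ht ↦ ?_) (by linarith)
    rcases le_total t 2 with h2 | h2
    · simp [sieveGap_eq_one h2]
    · exact hpos t ⟨h2, ht.2⟩
  rw [← sub_one_mul_sieveGap hx] at hint
  exact pos_of_mul_pos_right hint (by linarith)

theorem lowerSieveFun_lt_upperSieveFun {s : ℝ} (hs : 1 ≤ s) :
    lowerSieveFun s < upperSieveFun s := by
  rw [lowerSieveFun_eq_div hs, upperSieveFun_eq_div hs]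
  exact div_lt_div_of_pos_right (sub_pos.1 (sieveGap_pos s)) (by linarith)

theorem hasDerivAt_upperSieveFun {s : ℝ} (hs : 1 < s) :
    HasDerivAt upperSieveFun (-((upperSieveFun s - lowerSieveFun (s - 1)) / s)) s := by
  have hs0 : s ≠ 0 := by linarith
  have hdiv := ((hasDerivAt_upperSieveIntegral s).div (hasDerivAt_id s) hs0).congr_of_eventuallyEq
    (f₁ := upperSieveFun) (by
      filter_upwards [Ioi_mem_nhds hs] with x hx using upperSieveFun_eq_div (le_of_lt hx))
  refine hdiv.congr_deriv ?_
  rw [upperSieveFun_eq_div hs.le, id_eq]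
  field_simp
  ring

theorem hasDerivAt_lowerSieveFun {s : ℝ} (hs : 2 < s) :
    HasDerivAt lowerSieveFun ((upperSieveFun (s - 1) - lowerSieveFun s) / s) s := by
  have hs0 : s ≠ 0 := by linarith
  have hdiv := ((hasDerivAt_lowerSieveIntegral hs).div (hasDerivAt_id s) hs0).congr_of_eventuallyEq
    (f₁ := lowerSieveFun) (by
      filter_upwards [Ioi_mem_nhds (show 1 < s by linarith)] with x hx
        using lowerSieveFun_eq_div (le_of_lt hx))
  refine hdiv.congr_deriv ?_
  rw [lowerSieveFun_eq_div (by linarith : 1 ≤ s), id_eq]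
  field_simp

theorem antitoneOn_upperSieveFun_of_forall {T : ℝ}
    (h : ∀ s, 2 ≤ s → s < T → lowerSieveFun (s - 1) ≤ upperSieveFun s) :
    AntitoneOn upperSieveFun (Icc 1 T) := by
  have hle (s : ℝ) (h1 : 1 < s) (hT : s < T) : lowerSieveFun (s - 1) ≤ upperSieveFun s := by
    rcases le_total 2 s with h2 | h2
    · exact h s h2 hT
    · rw [upperSieveFun_eq_one_div h1.le (by linarith), lowerSieveFun_eq_zero (by linarith)]
      positivity
  refine antitoneOn_of_hasDerivWithinAt_nonpos (convex_Icc 1 T)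
    continuous_upperSieveFun.continuousOn
    (f' := fun s ↦ -((upperSieveFun s - lowerSieveFun (s - 1)) / s)) (fun s hs ↦ ?_) fun s hs ↦ ?_
  all_goals rw [interior_Icc] at hs
  · exact (hasDerivAt_upperSieveFun hs.1).hasDerivWithinAt
  · exact neg_nonpos.2 (div_nonneg (sub_nonneg.2 (hle s hs.1 hs.2)) (by linarith [hs.1]))

theorem monotoneOn_lowerSieveFun_of_forall {T : ℝ}
    (h : ∀ s, 2 ≤ s → s < T → lowerSieveFun s ≤ upperSieveFun (s - 1)) :
    MonotoneOn lowerSieveFun (Icc 2 T) := by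
  refine monotoneOn_of_hasDerivWithinAt_nonneg (convex_Icc 2 T)
    continuous_lowerSieveFun.continuousOn
    (f' := fun s ↦ (upperSieveFun (s - 1) - lowerSieveFun s) / s) (fun s hs ↦ ?_) fun s hs ↦ ?_
  all_goals rw [interior_Icc] at hs
  · exact (hasDerivAt_lowerSieveFun hs.1).hasDerivWithinAt
  · exact div_nonneg (sub_nonneg.2 (h s hs.1.le hs.2)) (by linarith [hs.1])

/-- As long as both inequalities hold, `F` decreases and `f` increases, which preserves the
inequalities because `f < F` at equal arguments. -/
theorem lowerSieveFun_lt_upperSieveFun_shift {s : ℝ} (hs : 2 ≤ s) :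
    lowerSieveFun (s - 1) < upperSieveFun s ∧ lowerSieveFun s < upperSieveFun (s - 1) := by
  have hshift : Continuous fun s : ℝ ↦ s - 1 := continuous_id.sub continuous_const
  have hcont : Continuous fun s ↦
      min (upperSieveFun s - lowerSieveFun (s - 1)) (upperSieveFun (s - 1) - lowerSieveFun s) :=
    (continuous_upperSieveFun.sub (continuous_lowerSieveFun.comp hshift)).min
      ((continuous_upperSieveFun.comp hshift).sub continuous_lowerSieveFun)
  have hpos := pos_of_forall_Ico_pos hcont (a := 2) (fun x hx hbelow ↦ ?_) hs
  · exact ⟨sub_pos.1 (lt_min_iff.1 hpos).1, sub_pos.1 (lt_min_iff.1 hpos).2⟩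
  have hanti : AntitoneOn upperSieveFun (Icc 1 x) := antitoneOn_upperSieveFun_of_forall
    fun t ht htx ↦ (sub_pos.1 (lt_min_iff.1 (hbelow t ⟨ht, htx⟩)).1).le
  have hmono : MonotoneOn lowerSieveFun (Icc 2 x) := monotoneOn_lowerSieveFun_of_forall
    fun t ht htx ↦ (sub_pos.1 (lt_min_iff.1 (hbelow t ⟨ht, htx⟩)).2).le
  have hlt : lowerSieveFun x < upperSieveFun x := lowerSieveFun_lt_upperSieveFun (by linarith)
  refine lt_min (sub_pos.2 ?_) (sub_pos.2 ?_)
  · rcases le_total x 3 with h3 | h3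
    · rw [upperSieveFun_eq_one_div (by linarith) h3, lowerSieveFun_eq_zero (by linarith)]
      positivity
    · exact (hmono ⟨by linarith, by linarith⟩ ⟨hx, le_rfl⟩ (by linarith)).trans_lt hlt
  · exact hlt.trans_le (hanti ⟨by linarith, by linarith⟩ ⟨by linarith, le_rfl⟩ (by linarith))

theorem antitoneOn_upperSieveFun : AntitoneOn upperSieveFun (Ici 1) := fun _ hx y _ hxy ↦
  antitoneOn_upperSieveFun_of_forall (T := y)
    (fun _ ht _ ↦ (lowerSieveFun_lt_upperSieveFun_shift ht).1.le)
    ⟨hx, hxy⟩ ⟨le_trans hx hxy, le_rfl⟩ hxy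

theorem monotoneOn_lowerSieveFun : MonotoneOn lowerSieveFun (Ici 2) := fun _ hx y _ hxy ↦
  monotoneOn_lowerSieveFun_of_forall (T := y)
    (fun _ ht _ ↦ (lowerSieveFun_lt_upperSieveFun_shift ht).2.le)
    ⟨hx, hxy⟩ ⟨le_trans hx hxy, le_rfl⟩ hxy

theorem lowerSieveFun_nonneg (s : ℝ) : 0 ≤ lowerSieveFun s := by
  rcases le_total s 2 with h | h
  · exact (lowerSieveFun_eq_zero h).ge
  · rw [← lowerSieveFun_eq_zero le_rfl]
    exact monotoneOn_lowerSieveFun (mem_Ici.2 le_rfl) h h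

theorem monotone_upperSieveIntegral : Monotone upperSieveIntegral :=
  monotone_of_hasDerivAt_nonneg hasDerivAt_upperSieveIntegral fun x ↦ lowerSieveFun_nonneg (x - 1)

theorem one_le_upperSieveIntegral (s : ℝ) : 1 ≤ upperSieveIntegral s :=
  (upperSieveIntegral_eq_one (min_le_right s 3)).symm.trans_le
    (monotone_upperSieveIntegral (min_le_left s 3))

theorem monotone_lowerSieveFun : Monotone lowerSieveFun := fun x y hxy ↦ by
  rcases le_total x 2 with h | h
  · rw [lowerSieveFun_eq_zero h]
    exact lowerSieveFun_nonneg y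
  · exact monotoneOn_lowerSieveFun h (h.trans hxy) hxy

theorem upperSieveFun_pos {s : ℝ} (hs : 1 ≤ s) : 0 < upperSieveFun s :=
  (lowerSieveFun_nonneg s).trans_lt (lowerSieveFun_lt_upperSieveFun hs)

theorem upperSieveFun_le_one {s : ℝ} (hs : 1 ≤ s) : upperSieveFun s ≤ 1 := by
  have hone : upperSieveFun 1 = 1 := by
    rw [upperSieveFun_eq_one_div le_rfl (by norm_num), div_one]
  exact hone ▸ antitoneOn_upperSieveFun (mem_Ici.2 le_rfl) hs hs

theorem exists_lowerSieveFun_le_le_upperSieveFun : ∃ c : ℝ, 0 < c ∧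
    (∀ s, 1 ≤ s → lowerSieveFun s ≤ c) ∧ ∀ s, 1 ≤ s → c ≤ upperSieveFun s := by
  have hle {x y : ℝ} (hx : 1 ≤ x) (hy : 1 ≤ y) : lowerSieveFun y ≤ upperSieveFun x := by
    rcases le_total x y with h | h
    · exact (lowerSieveFun_lt_upperSieveFun hy).le.trans (antitoneOn_upperSieveFun hx hy h)
    · exact (monotone_lowerSieveFun h).trans (lowerSieveFun_lt_upperSieveFun hx).le
  have hlower (s : ℝ) (hs : 1 ≤ s) : lowerSieveFun s ≤ sInf (upperSieveFun '' Ici 1) :=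
    le_csInf ⟨_, mem_image_of_mem _ (mem_Ici.2 le_rfl)⟩ (forall_mem_image.2 fun _ hx ↦ hle hx hs)
  refine ⟨sInf (upperSieveFun '' Ici 1), lt_of_lt_of_le ?_ (hlower 3 (by norm_num)), hlower,
    fun s hs ↦ csInf_le ⟨0, forall_mem_image.2 fun _ hx ↦ (upperSieveFun_pos hx).le⟩
      (mem_image_of_mem _ hs)⟩
  rw [lowerSieveFun_eq_div (by norm_num), lowerSieveIntegral_eq_log (by norm_num) (by norm_num)]
  exact div_pos (Real.log_pos (by norm_num)) (by norm_num)

end SieveFunctions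

section LinearSieve

open Real Set

theorem exists_sum_one_div_prime_le :
    ∃ C : ℝ, 0 < C ∧ ∀ (N m : ℕ) (D : ℝ), N ≠ 0 → 2 ≤ m → m ≤ D → log D ≤ N * log m →
      ∑ p ∈ Finset.Ico m (⌊D⌋₊ + 1) with p.Prime, 1 / (p : ℝ) ≤ log N + C := by
  obtain ⟨C, hC, hmertens⟩ := exists_abs_sum_one_div_sub_log_log_le
  refine ⟨C / log 2 + log 2, by positivity, fun N m D hN hm hmD hD ↦ ?_⟩
  have hm0 : (2 : ℝ) ≤ m := by exact_mod_cast hm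
  have hlogm : log 2 ≤ log m := log_le_log two_pos hm0
  have hlog2 : 0 < log 2 := log_pos one_lt_two
  have hN0 : (0 : ℝ) < N := by exact_mod_cast Nat.pos_of_ne_zero hN
  have hfloor : log (⌊D⌋₊ + 1 : ℕ) ≤ 2 * N * log m := by
    have hle : ((⌊D⌋₊ + 1 : ℕ) : ℝ) ≤ D * D := by
      push_cast
      nlinarith [Nat.floor_le (show 0 ≤ D by linarith)]
    calc log (⌊D⌋₊ + 1 : ℕ) ≤ log (D * D) := log_le_log (by positivity) hle
      _ = 2 * log D := by rw [log_mul (by linarith) (by linarith)]; ring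
      _ ≤ 2 * N * log m := by linarith
  have hpos : 0 < log (⌊D⌋₊ + 1 : ℕ) :=
    log_pos (by exact_mod_cast Nat.succ_lt_succ (Nat.floor_pos.2 (by linarith)))
  have hloglog : log (log (⌊D⌋₊ + 1 : ℕ)) - log (log m) ≤ log N + log 2 := by
    rw [sub_le_iff_le_add, ← log_mul hN0.ne' two_ne_zero, ← log_mul (by positivity) (by linarith)]
    exact log_le_log hpos (hfloor.trans_eq (by ring))
  have hsum := (abs_le.1 (hmertens m (⌊D⌋₊ + 1) hm (Nat.le_succ_of_le (Nat.le_floor hmD)))).2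
  have herr : C / log m ≤ C / log 2 := div_le_div_of_nonneg_left hC hlog2 hlogm
  linarith

theorem hasDerivAt_neg_comp_div_div {g : ℝ → ℝ} {g' T u : ℝ} (hT : T ≠ 0) (hu : u ≠ 0)
    (hg : HasDerivAt g g' (T / u)) :
    HasDerivAt (fun x ↦ -(g (T / x) / T)) (g' / u ^ 2) u := by
  have hdiv : HasDerivAt (fun x ↦ T / x) (-(T / u ^ 2)) u := by
    simpa [div_eq_mul_inv, neg_div] using (hasDerivAt_inv hu).const_mul T
  refine ((hg.comp u hdiv).div_const T).neg.congr_deriv ?_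
  field_simp

theorem integral_comp_div_div_sq {g g' : ℝ → ℝ} {T a b : ℝ} (hT : 0 < T) (ha : 0 < a) (hab : a ≤ b)
    (hg : Continuous g) (hg' : Continuous g')
    (hderiv : ∀ x, T / b < x → HasDerivAt g (g' (x - 1)) x) :
    ∫ u in a..b, g' (T / u - 1) / u ^ 2 = (g (T / a) - g (T / b)) / T := by
  have hne {u : ℝ} (hu : u ∈ Icc a b) : u ≠ 0 := (ha.trans_le hu.1).ne'
  have hdivcont : ContinuousOn (fun u ↦ T / u) (Icc a b) :=
    continuousOn_const.div continuousOn_id fun u hu ↦ hne hu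
  have hint : IntervalIntegrable (fun u ↦ g' (T / u - 1) / u ^ 2) MeasureTheory.volume a b := by
    refine ContinuousOn.intervalIntegrable ?_
    rw [uIcc_of_le hab]
    exact (hg'.comp_continuousOn (hdivcont.sub continuousOn_const)).div (continuousOn_id.pow 2)
      fun u hu ↦ pow_ne_zero 2 (hne hu)
  rw [intervalIntegral.integral_eq_sub_of_hasDerivAt_of_le hab
    ((hg.comp_continuousOn hdivcont).div_const T).neg (fun u hu ↦ hasDerivAt_neg_comp_div_div hT.ne'
      (hne (Ioo_subset_Icc_self hu)) (hderiv _ (div_lt_div_of_pos_left hT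
        (ha.trans hu.1) hu.2))) hint]
  simp only [Pi.neg_apply, Function.comp_apply]
  ring

theorem exists_abs_sum_one_div_mul_log_mul_sub_le :
    ∃ C : ℝ, 0 ≤ C ∧ ∀ (m n : ℕ) (T : ℝ) (g g' : ℝ → ℝ), 2 ≤ m → m ≤ n → 0 < T → Continuous g →
      Continuous g' → (∀ x, T / log n < x → HasDerivAt g (g' (x - 1)) x) →
      MonotoneOn g' (Ici (T / log n - 1)) → (∀ x, T / log n - 1 ≤ x → 0 ≤ g' x) →
        |∑ p ∈ Finset.Ico m n with p.Prime, 1 / (p * log p) * g' (T / log p - 1) -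
          (g (T / log m) - g (T / log n)) / T| ≤ C * (g' (T / log m - 1) / log m ^ 2) := by
  obtain ⟨C, hC, habel⟩ := exists_abs_sum_log_div_mul_sub_integral_le
  refine ⟨C, hC, fun m n T g g' hm hmn hT hg hg' hderiv hmono hnonneg ↦ ?_⟩
  have hlogm : 0 < log m := log_pos (by exact_mod_cast hm)
  have harg {u v : ℝ} (hu : log m ≤ u) (huv : u ≤ v) : T / v - 1 ≤ T / u - 1 :=
    sub_le_sub_right (div_le_div_of_nonneg_left hT.le (hlogm.trans_le hu) huv) 1
  have hanti : AntitoneOn (fun u ↦ g' (T / u - 1) / u ^ 2) (Icc (log m) (log n)) :=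
    fun u hu v hv huv ↦ by
      have hu0 : 0 < u := hlogm.trans_le hu.1
      exact div_le_div₀ (hnonneg _ (harg hu.1 hu.2)) (hmono (harg hv.1 hv.2) (harg hu.1 hu.2)
        (harg hu.1 huv)) (by positivity) (by gcongr)
  have hmain := habel m n hm hmn _ hanti (div_nonneg (hnonneg _ le_rfl) (sq_nonneg _))
  rw [integral_comp_div_div_sq hT hlogm (monotone_log_natCast hmn) hg hg' hderiv] at hmain
  have hsum : ∑ p ∈ Finset.Ico m n with p.Prime, 1 / (p * log p) * g' (T / log p - 1) =
      ∑ p ∈ Finset.Ico m n with p.Prime, log p / p * (g' (T / log p - 1) / log p ^ 2) := by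
    refine Finset.sum_congr rfl fun p hp ↦ ?_
    have hp : 0 < log p := log_pos (by exact_mod_cast (Finset.mem_filter.1 hp).2.one_lt)
    field_simp
  rwa [hsum]

theorem exists_abs_sum_lowerSieveFun_sub_le :
    ∃ C : ℝ, 0 ≤ C ∧ ∀ (m n : ℕ) (T : ℝ), 2 ≤ m → m ≤ n → 0 < T →
      |∑ p ∈ Finset.Ico m n with p.Prime, 1 / (p * log p) * lowerSieveFun (T / log p - 1) -
        (upperSieveIntegral (T / log m) - upperSieveIntegral (T / log n)) / T| ≤
          C / log m ^ 2 := by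
  obtain ⟨C, hC, hsum⟩ := exists_abs_sum_one_div_mul_log_mul_sub_le
  refine ⟨C, hC, fun m n T hm hmn hT ↦ (hsum m n T _ _ hm hmn hT continuous_upperSieveIntegral
    continuous_lowerSieveFun (fun x _ ↦ hasDerivAt_upperSieveIntegral x)
    (monotone_lowerSieveFun.monotoneOn _) fun x _ ↦ lowerSieveFun_nonneg x).trans ?_⟩
  have hle : lowerSieveFun (T / log m - 1) ≤ 1 := by
    rcases le_total (T / log m - 1) 2 with h | h
    · simp [lowerSieveFun_eq_zero h]
    · exact (lowerSieveFun_lt_upperSieveFun (by linarith)).le.trans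
        (upperSieveFun_le_one (by linarith))
  rw [← mul_div_assoc]
  gcongr
  exact mul_le_of_le_one_right hC hle

/-- Partial summation is applied to `1` and `1 - F`, since `F` itself decreases. -/
theorem exists_abs_sum_upperSieveFun_sub_le :
    ∃ C : ℝ, 0 ≤ C ∧ ∀ (m n : ℕ) (T : ℝ), 2 ≤ m → m ≤ n → 2 * log n ≤ T →
      |∑ p ∈ Finset.Ico m n with p.Prime, 1 / (p * log p) * upperSieveFun (T / log p - 1) -
        (lowerSieveIntegral (T / log m) - lowerSieveIntegral (T / log n)) / T| ≤
          C / log m ^ 2 := by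
  obtain ⟨C, hC, hsum⟩ := exists_abs_sum_one_div_mul_log_mul_sub_le
  refine ⟨2 * C, by positivity, fun m n T hm hmn hT ↦ ?_⟩
  have hlogm : 0 < log m := log_pos (by exact_mod_cast hm)
  have hlogn : 0 < log n := hlogm.trans_le (monotone_log_natCast hmn)
  have hT0 : 0 < T := by linarith
  have htwo : 2 ≤ T / log n := (le_div_iff₀ hlogn).2 hT
  have htwo' : 2 ≤ T / log m :=
    htwo.trans (div_le_div_of_nonneg_left hT0.le hlogm (monotone_log_natCast hmn))
  have hone : 1 ≤ T / log n - 1 := by linarith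
  have hconst := hsum m n T id (fun _ ↦ 1) hm hmn hT0 continuous_id continuous_const
    (fun x _ ↦ hasDerivAt_id x) monotoneOn_const fun _ _ ↦ zero_le_one
  have hcompl := hsum m n T (fun x ↦ x - lowerSieveIntegral x) (fun x ↦ 1 - upperSieveFun x)
    hm hmn hT0 (continuous_id.sub continuous_lowerSieveIntegral)
    (continuous_const.sub continuous_upperSieveFun)
    (fun x hx ↦ (hasDerivAt_id x).sub (hasDerivAt_lowerSieveIntegral (htwo.trans_lt hx)))
    (fun x hx y hy hxy ↦ sub_le_sub_left (antitoneOn_upperSieveFun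
      (hone.trans hx) (hone.trans hy) hxy) 1)
    fun x hx ↦ sub_nonneg.2 (upperSieveFun_le_one (by linarith))
  have hFpos := upperSieveFun_pos (show 1 ≤ T / log m - 1 by linarith)
  have hsplit : ∑ p ∈ Finset.Ico m n with p.Prime, 1 / (p * log p) *
      upperSieveFun (T / log p - 1) =
        ∑ p ∈ Finset.Ico m n with p.Prime, 1 / (p * log p) * 1 -
        ∑ p ∈ Finset.Ico m n with p.Prime, 1 / (p * log p) *
          (1 - upperSieveFun (T / log p - 1)) := by
    rw [← Finset.sum_sub_distrib]
    exact Finset.sum_congr rfl fun p _ ↦ by ring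
  refine le_trans (le_of_eq ?_) ((abs_sub _ _).trans ((add_le_add hconst hcompl).trans ?_))
  · rw [hsplit]
    congr 1
    simp only [id_eq]
    ring
  · rw [← mul_add, ← add_div, mul_comm 2 C, mul_div_assoc]
    gcongr
    linarith

/-- The bounds of the linear sieve with error `ε`, for primes `≥ m` and level at most `m ^ N`. The
constant `c` stands for the common limit of the normalized sieve functions at infinity, that is,
for the density of the sieve in the normalization of `upperSieveFun`. -/
def LinearSieveBound (c : ℝ) (m N : ℕ) (ε : ℝ) : Prop :=
  ∀ (n : ℕ) (D : ℝ), m ≤ n → m ≤ D → log D ≤ N * log m →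
    sieveSum m 2 n true D ≤ log m / (c * log D) * upperSieveIntegral (log D / log n) + ε ∧
    ((n : ℝ) ^ 2 ≤ D →
      log m / (c * log D) * lowerSieveIntegral (log D / log n) - ε ≤ sieveSum m 2 n false D)

theorem LinearSieveBound.div_prime {c ε D : ℝ} {m N p : ℕ} (h : LinearSieveBound c m N ε)
    (hm : 2 ≤ m) (hmp : m ≤ p) (hpD : (p : ℝ) ^ 2 ≤ D) (hD : log D ≤ (N + 1 : ℕ) * log m) :
    sieveSum m 2 p true (D / p) ≤
      log m / c * (1 / log p * upperSieveFun (log D / log p - 1)) + ε ∧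
    ((p : ℝ) ^ 3 ≤ D →
      log m / c * (1 / log p * lowerSieveFun (log D / log p - 1)) - ε ≤
        sieveSum m 2 p false (D / p)) := by
  have hmp' : (m : ℝ) ≤ p := by exact_mod_cast hmp
  have hm' : (2 : ℝ) ≤ m := by exact_mod_cast hm
  have hp0 : (0 : ℝ) < p := by linarith
  have hpdiv : (p : ℝ) ≤ D / p := by rwa [le_div_iff₀ hp0, ← sq]
  have hlogp : 0 < log p := log_pos (by linarith)
  have hlogmp : log m ≤ log p := log_le_log (by linarith) hmp'
  have hlogdiv : log (D / p) = log D - log p := log_div (by nlinarith) hp0.ne'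
  have hlogle : log p ≤ log (D / p) := log_le_log hp0 hpdiv
  have hratio : log D / log p - 1 = log (D / p) / log p := by
    rw [hlogdiv]
    field_simp
  have hratio1 : 1 ≤ log (D / p) / log p := (one_le_div₀ hlogp).2 hlogle
  have hscale (A : ℝ) : log m / c * (1 / log p * (A / (log (D / p) / log p))) =
      log m / (c * log (D / p)) * A := by
    have hne : log (D / p) ≠ 0 := by linarith
    field_simp
  obtain ⟨hupper, hlower⟩ := h p (D / p) hmp (hmp'.trans hpdiv) (by push_cast at hD; linarith)
  rw [hratio, upperSieveFun_eq_div hratio1, lowerSieveFun_eq_div hratio1, hscale, hscale]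
  exact ⟨hupper, fun h3 ↦ hlower (by rwa [le_div_iff₀ hp0, ← pow_succ])⟩

theorem sum_one_div_prime_le_of_forall {s : Finset ℕ} {m : ℕ} {B D : ℝ}
    (hs : ∀ p ∈ s, p.Prime ∧ m ≤ p ∧ (p : ℝ) ≤ D)
    (hB : ∑ p ∈ Finset.Ico m (⌊D⌋₊ + 1) with p.Prime, 1 / (p : ℝ) ≤ B) :
    ∑ p ∈ s, 1 / (p : ℝ) ≤ B := by
  refine (Finset.sum_le_sum_of_subset_of_nonneg (fun p hp ↦ ?_)
    fun p _ _ ↦ by positivity).trans hB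
  obtain ⟨hprime, hmp, hpD⟩ := hs p hp
  exact Finset.mem_filter.2 ⟨Finset.mem_Ico.2 ⟨hmp, Nat.lt_succ_of_le (Nat.le_floor hpD)⟩, hprime⟩

theorem one_le_div_mul_upperSieveIntegral {c D : ℝ} {m : ℕ} (hc : 0 < c)
    (hcF : ∀ s, 1 ≤ s → c ≤ upperSieveFun s) (hm : 2 ≤ m) (hmD : m ≤ D) :
    1 ≤ log m / (c * log D) * upperSieveIntegral (log D / log m) := by
  have hlogm : 0 < log m := log_pos (by exact_mod_cast hm)
  have hlogD : log m ≤ log D := log_le_log (by positivity) hmD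
  have hs : 1 ≤ log D / log m := (one_le_div₀ hlogm).2 hlogD
  have hF := hcF _ hs
  rw [upperSieveFun_eq_div hs, ← one_le_div₀ hc] at hF
  refine hF.trans_eq ?_
  have hne : log D ≠ 0 := by linarith
  field_simp

theorem div_mul_lowerSieveIntegral_le_one {c D : ℝ} {m : ℕ} (hc : 0 < c)
    (hcf : ∀ s, 1 ≤ s → lowerSieveFun s ≤ c) (hm : 2 ≤ m) (hmD : m ≤ D) :
    log m / (c * log D) * lowerSieveIntegral (log D / log m) ≤ 1 := by
  have hlogm : 0 < log m := log_pos (by exact_mod_cast hm)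
  have hlogD : log m ≤ log D := log_le_log (by positivity) hmD
  have hs : 1 ≤ log D / log m := (one_le_div₀ hlogm).2 hlogD
  have hf := hcf _ hs
  rw [lowerSieveFun_eq_div hs, ← div_le_one₀ hc] at hf
  refine le_of_eq_of_le ?_ hf
  have hne : log D ≠ 0 := by linarith
  field_simp

theorem abs_log_div_mul_sub_le {c C D S g₁ g₂ : ℝ} {m : ℕ} (hc : 0 < c) (hm : 2 ≤ m)
    (hS : |S - (g₁ - g₂) / log D| ≤ C / log m ^ 2) :
    |log m / c * S - (log m / (c * log D) * g₁ - log m / (c * log D) * g₂)| ≤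
      C / (c * log m) := by
  have hlogm : 0 < log m := log_pos (by exact_mod_cast hm)
  calc _ = log m / c * |S - (g₁ - g₂) / log D| := by
        rw [← abs_of_pos (div_pos hlogm hc), ← abs_mul, abs_of_pos (div_pos hlogm hc)]
        congr 1
        ring
    _ ≤ log m / c * (C / log m ^ 2) := by gcongr
    _ = C / (c * log m) := by field_simp

theorem LinearSieveBound.sieveSum_true_le {c ε B C D : ℝ} {m N n : ℕ} (hc : 0 < c)
    (hcF : ∀ s, 1 ≤ s → c ≤ upperSieveFun s) (hε : 0 ≤ ε) (h : LinearSieveBound c m N ε)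
    (hm : 2 ≤ m) (hmD : m ≤ D) (hD : log D ≤ (N + 1 : ℕ) * log m)
    (hB : ∑ p ∈ Finset.Ico m (⌊D⌋₊ + 1) with p.Prime, 1 / (p : ℝ) ≤ B)
    (hC : |∑ p ∈ Finset.Ico m n with p.Prime,
        1 / (p * log p) * lowerSieveFun (log D / log p - 1) -
      (upperSieveIntegral (log D / log m) - upperSieveIntegral (log D / log n)) / log D| ≤
        C / log m ^ 2) :
    sieveSum m 2 n true D ≤ log m / (c * log D) * upperSieveIntegral (log D / log n) +
      (C / (c * log m) + ε * B) := by
  have hD0 : 0 < D := lt_of_lt_of_le (by positivity) hmD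
  have hlarge (p : ℕ) (hp : p ∈ {p ∈ Finset.Ico m n | p.Prime}) (h3 : D ≤ (p : ℝ) ^ 3) :
      lowerSieveFun (log D / log p - 1) = 0 := by
    have hp1 : 0 < log p := log_pos (by exact_mod_cast (Finset.mem_filter.1 hp).2.one_lt)
    have hlog : log D ≤ 3 * log p := by
      have := log_le_log hD0 h3
      rwa [log_pow] at this
    exact lowerSieveFun_eq_zero (by linarith [(div_le_iff₀ hp1).2 hlog])
  have hterm (p : ℕ) (hp : p ∈ {p ∈ Finset.Ico m n | p.Prime}) :
      log m / c * (1 / (p * log p) * lowerSieveFun (log D / log p - 1)) -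
        (if (p : ℝ) ^ 3 < D then ε * (1 / p) else 0) ≤
      if (p : ℝ) ^ 3 < D then 1 / (p : ℝ) * sieveSum m 2 p false (D / p) else 0 := by
    split_ifs with h3
    · obtain ⟨hpmn, hprime⟩ := Finset.mem_filter.1 hp
      have hp1 : (1 : ℝ) ≤ p := by exact_mod_cast hprime.one_le
      have hp2 : (p : ℝ) ^ 2 ≤ D := (pow_le_pow_right₀ hp1 (by norm_num)).trans h3.le
      refine le_trans (le_of_eq ?_) (mul_le_mul_of_nonneg_left
        ((h.div_prime hm (Finset.mem_Ico.1 hpmn).1 hp2 hD).2 h3.le) (by positivity))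
      field_simp
    · simp [hlarge p hp (not_lt.1 h3)]
  have herror : ∑ p ∈ Finset.Ico m n with p.Prime,
      (if (p : ℝ) ^ 3 < D then ε * (1 / (p : ℝ)) else 0) ≤ ε * B := by
    rw [← Finset.sum_filter, ← Finset.mul_sum]
    refine mul_le_mul_of_nonneg_left (sum_one_div_prime_le_of_forall (fun p hp ↦ ?_) hB) hε
    simp only [Finset.mem_filter, Finset.mem_Ico] at hp
    have hp1 : (1 : ℝ) ≤ p := by exact_mod_cast hp.1.2.one_le
    exact ⟨hp.1.2, hp.1.1.1, (le_self_pow₀ hp1 three_ne_zero).trans hp.2.le⟩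
  have hsum := Finset.sum_le_sum hterm
  rw [Finset.sum_sub_distrib, ← Finset.mul_sum] at hsum
  have hmain := (abs_le.1 (abs_log_div_mul_sub_le hc hm hC)).1
  have hone := one_le_div_mul_upperSieveIntegral hc hcF hm hmD
  rw [sieveSum_eq_one_sub_sum]
  simp only [forall_const, Bool.not_true]
  linarith

theorem LinearSieveBound.le_sieveSum_false {c ε B C D : ℝ} {m N n : ℕ} (hc : 0 < c)
    (hcf : ∀ s, 1 ≤ s → lowerSieveFun s ≤ c) (hε : 0 ≤ ε) (h : LinearSieveBound c m N ε)
    (hm : 2 ≤ m) (hmD : m ≤ D) (hD : log D ≤ (N + 1 : ℕ) * log m) (hnD : (n : ℝ) ^ 2 ≤ D)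
    (hB : ∑ p ∈ Finset.Ico m (⌊D⌋₊ + 1) with p.Prime, 1 / (p : ℝ) ≤ B)
    (hC : |∑ p ∈ Finset.Ico m n with p.Prime,
        1 / (p * log p) * upperSieveFun (log D / log p - 1) -
      (lowerSieveIntegral (log D / log m) - lowerSieveIntegral (log D / log n)) / log D| ≤
        C / log m ^ 2) :
    log m / (c * log D) * lowerSieveIntegral (log D / log n) - (C / (c * log m) + ε * B) ≤
      sieveSum m 2 n false D := by
  have hsq {p : ℕ} (hp : p ∈ {p ∈ Finset.Ico m n | p.Prime}) : (p : ℝ) ^ 2 ≤ D := by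
    have hpn : (p : ℝ) ≤ n := by
      exact_mod_cast (Finset.mem_Ico.1 (Finset.mem_filter.1 hp).1).2.le
    exact (pow_le_pow_left₀ p.cast_nonneg hpn 2).trans hnD
  have hterm (p : ℕ) (hp : p ∈ {p ∈ Finset.Ico m n | p.Prime}) :
      1 / (p : ℝ) * sieveSum m 2 p true (D / p) ≤
        log m / c * (1 / (p * log p) * upperSieveFun (log D / log p - 1)) + ε * (1 / p) := by
    obtain ⟨hpmn, _⟩ := Finset.mem_filter.1 hp
    refine (mul_le_mul_of_nonneg_left
      (h.div_prime hm (Finset.mem_Ico.1 hpmn).1 (hsq hp) hD).1 (by positivity)).trans_eq ?_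
    field_simp
  have herror : ε * ∑ p ∈ Finset.Ico m n with p.Prime, 1 / (p : ℝ) ≤ ε * B := by
    refine mul_le_mul_of_nonneg_left (sum_one_div_prime_le_of_forall (fun p hp ↦ ?_) hB) hε
    obtain ⟨hpmn, hprime⟩ := Finset.mem_filter.1 hp
    have hp1 : (1 : ℝ) ≤ p := by exact_mod_cast hprime.one_le
    exact ⟨hprime, (Finset.mem_Ico.1 hpmn).1, (le_self_pow₀ hp1 two_ne_zero).trans (hsq hp)⟩
  have hsum := Finset.sum_le_sum hterm
  rw [Finset.sum_add_distrib, ← Finset.mul_sum, ← Finset.mul_sum] at hsum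
  have hmain := (abs_le.1 (abs_log_div_mul_sub_le hc hm hC)).2
  have hone := div_mul_lowerSieveIntegral_le_one hc hcf hm hmD
  rw [sieveSum_false_eq_one_sub_sum]
  linarith

/-- The induction on `N` iterates Buchstab's identity: removing the largest prime `p ≥ m` turns
the level `D ≤ m ^ (N + 1)` into `D / p ≤ m ^ N`. -/
theorem eventually_linearSieveBound {c : ℝ} (hc : 0 < c)
    (hcf : ∀ s, 1 ≤ s → lowerSieveFun s ≤ c) (hcF : ∀ s, 1 ≤ s → c ≤ upperSieveFun s)
    (N : ℕ) {ε : ℝ} (hε : 0 < ε) : ∀ᶠ m in Filter.atTop, LinearSieveBound c m N ε := by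
  obtain ⟨B, hB, hsumB⟩ := exists_sum_one_div_prime_le
  obtain ⟨C₁, hC₁, hlower⟩ := exists_abs_sum_lowerSieveFun_sub_le
  obtain ⟨C₂, hC₂, hupper⟩ := exists_abs_sum_upperSieveFun_sub_le
  induction N generalizing ε with
  | zero =>
    filter_upwards [Filter.eventually_ge_atTop 2] with m hm n D _ hmD hD
    have hlogm : 0 < log m := log_pos (by exact_mod_cast hm)
    have hlogD : log m ≤ log D := log_le_log (by positivity) hmD
    norm_num at hD
    linarith
  | succ N ih =>
    have _hlogN : 0 ≤ log (N + 1 : ℕ) := log_natCast_nonneg _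
    set K := log (N + 1 : ℕ) + B
    have hK : 0 < K := by positivity
    have hmertens : ∀ᶠ m : ℕ in Filter.atTop, (C₁ + C₂) / c / (ε / 2) ≤ log m :=
      (tendsto_log_atTop.comp tendsto_natCast_atTop_atTop).eventually_ge_atTop _
    filter_upwards [ih (ε := ε / (2 * K)) (by positivity), hmertens, Filter.eventually_ge_atTop 2]
      with m hbound hlarge hm n D hmn hmD hD
    have hlogm : 0 < log m := log_pos (by exact_mod_cast hm)
    have hlogD : log m ≤ log D := log_le_log (by positivity) hmD
    have herr : (C₁ + C₂) / (c * log m) + ε / (2 * K) * K ≤ ε := by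
      have hhalf : (C₁ + C₂) / (c * log m) ≤ ε / 2 := by
        rw [← div_div, div_le_iff₀ hlogm]
        rwa [div_le_iff₀' (by positivity)] at hlarge
      have hcancel : ε / (2 * K) * K = ε / 2 := by field_simp
      linarith
    have hsum := hsumB (N + 1) m D N.succ_ne_zero hm hmD hD
    have _hD0 : 0 < D := lt_of_lt_of_le (by positivity) hmD
    have hC₁le : C₁ / log m ^ 2 ≤ (C₁ + C₂) / log m ^ 2 := by gcongr; linarith
    have hC₂le : C₂ / log m ^ 2 ≤ (C₁ + C₂) / log m ^ 2 := by gcongr; linarith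
    refine ⟨(hbound.sieveSum_true_le hc hcF (by positivity) hm hmD hD hsum
      ((hlower m n (log D) hm hmn (by linarith)).trans hC₁le)).trans (by gcongr), fun hnD ↦ ?_⟩
    have hlogn : 2 * log n ≤ log D := by
      have hn0 : (0 : ℝ) < n := by exact_mod_cast (by lia : 0 < n)
      have := log_le_log (by positivity) hnD
      rwa [log_pow] at this
    refine le_trans (by gcongr) (hbound.le_sieveSum_false hc hcf (by positivity) hm hmD hD hnD hsum
      ((hupper m n (log D) hm hmn hlogn).trans hC₂le))

end LinearSieve

section WeightedSum

open Real Set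

/-- The cut-off functions admitted in the weighted sieve: steps from `0` to `1` inside `[1, √2]`. -/
structure IsSqrtTwoStep (ψ : ℝ → ℝ) : Prop where
  mem_Icc : ∀ x, ψ x ∈ Icc (0 : ℝ) 1
  eq_zero : ∀ x ≤ 1, ψ x = 0
  eq_one : ∀ x, √2 ≤ x → ψ x = 1

namespace IsSqrtTwoStep

variable {ψ : ℝ → ℝ} (hψ : IsSqrtTwoStep ψ)

include hψ

theorem partitionWeight_eq_zero_of_le_one {x : ℝ} (hx : x ≤ 1) : partitionWeight ψ x = 0 := by
  have hdiv : x / √2 ≤ 1 := by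
    rw [div_le_one (by positivity)]
    exact hx.trans (one_le_sqrt.2 one_le_two)
  rw [partitionWeight, hψ.eq_zero x hx, hψ.eq_zero _ hdiv, sub_zero]

theorem partitionWeight_eq_zero_of_two_le {x : ℝ} (hx : 2 ≤ x) : partitionWeight ψ x = 0 := by
  have hdiv : √2 ≤ x / √2 := by rwa [le_div_iff₀ (by positivity), mul_self_sqrt zero_le_two]
  have hx' : √2 ≤ x := hdiv.trans (div_le_self (by linarith) (one_le_sqrt.2 one_le_two))
  rw [partitionWeight, hψ.eq_one x hx', hψ.eq_one _ hdiv, sub_self]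

theorem partitionWeight_nonneg (x : ℝ) : 0 ≤ partitionWeight ψ x := by
  rw [partitionWeight, sub_nonneg]
  rcases le_total (√2) x with h | h
  · exact (hψ.mem_Icc _).2.trans_eq (hψ.eq_one x h).symm
  · rw [hψ.eq_zero (x / √2) ((div_le_one (by positivity)).2 h)]
    exact (hψ.mem_Icc x).1

theorem sum_partitionWeight_le_one (a b : ℕ) (x : ℝ) :
    ∑ i ∈ Finset.Icc a b, partitionWeight ψ (x / √2 ^ i) ≤ 1 := by
  have hterm (i : ℕ) :
      partitionWeight ψ (x / √2 ^ i) = -(ψ (x / √2 ^ (i + 1)) - ψ (x / √2 ^ i)) := by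
    rw [partitionWeight, pow_succ, div_div]
    ring
  rcases le_or_gt a (b + 1) with h | h
  · rw [← Finset.Ico_add_one_right_eq_Icc, Finset.sum_congr rfl fun i _ ↦ hterm i,
      Finset.sum_neg_distrib, Finset.sum_Ico_sub (fun i ↦ ψ (x / √2 ^ i)) h]
    linarith [(hψ.mem_Icc (x / √2 ^ a)).2, (hψ.mem_Icc (x / √2 ^ (b + 1))).1]
  · simp [Finset.Icc_eq_empty (by lia : ¬a ≤ b)]

theorem partitionWeight_div_pow_eq_zero {p : ℝ} {a : ℕ} (hp : ¬(√2 ^ a < p ∧ p < √2 ^ (a + 2))) :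
    partitionWeight ψ (p / √2 ^ a) = 0 := by
  have hpow : 0 < √2 ^ a := by positivity
  rw [not_and_or, not_lt, not_lt] at hp
  rcases hp with h | h
  · exact hψ.partitionWeight_eq_zero_of_le_one ((div_le_one hpow).2 h)
  · refine hψ.partitionWeight_eq_zero_of_two_le ?_
    rwa [le_div_iff₀ hpow, mul_comm, ← show √2 ^ (a + 2) = √2 ^ a * 2 by
      rw [pow_add, sq_sqrt zero_le_two]]

end IsSqrtTwoStep

theorem tsum_le_sum_of_nonpos_of_le {f g : ℕ → ℝ} {s : Finset ℕ} (hf : Summable f)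
    (hs : ∀ i ∉ s, f i ≤ 0) (hfg : ∀ i ∈ s, f i ≤ g i) : ∑' i, f i ≤ ∑ i ∈ s, g i := by
  have hneg := hf.neg.sum_le_tsum s fun i hi ↦ neg_nonneg.2 (hs i hi)
  rw [tsum_neg, Finset.sum_neg_distrib, neg_le_neg_iff] at hneg
  exact hneg.trans (Finset.sum_le_sum hfg)

theorem one_sub_log_div_log_nonneg_iff {p : ℕ} {y : ℝ} (hp : p.Prime) (hy : 1 < y) :
    0 ≤ 1 - log p / log y ↔ (p : ℝ) ≤ y := by
  rw [sub_nonneg, div_le_one (log_pos hy),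
    log_le_log_iff (by exact_mod_cast hp.pos) (by linarith)]

theorem IsSqrtTwoStep.tsum_partitionWeight_le {ψ : ℝ → ℝ} (hψ : IsSqrtTwoStep ψ) {y Λ : ℝ}
    {p₀ a : ℕ} {H : ℕ → ℝ} (hy : 1 < y) (hΛ : 0 ≤ Λ)
    (hΛH : ∀ p : ℕ, √2 ^ a < p → p < √2 ^ (a + 2) → p < y → p₀ ≤ p ∧ Λ ≤ H p) :
    ∑' p : ℕ, (if p.Prime then
      partitionWeight ψ (p / √2 ^ a) * (1 - log p / log y) * (Λ / p) else 0) ≤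
    ∑ p ∈ Finset.Ico p₀ ⌈y⌉₊ with p.Prime,
      partitionWeight ψ (p / √2 ^ a) * (1 / (p : ℝ) * ((1 - log p / log y) * H p)) := by
  refine tsum_le_sum_of_nonpos_of_le (summable_of_ne_finset_zero
    (s := Finset.range ⌈√2 ^ (a + 2)⌉₊) fun p hp ↦ ?_) (fun p hp ↦ ?_) fun p hp ↦ ?_
  · rw [Finset.mem_range, Nat.lt_ceil] at hp
    simp [hψ.partitionWeight_div_pow_eq_zero fun h ↦ hp h.2]
  · split_ifs with hprime
    swap
    · exact le_rfl
    rcases lt_or_ge (p : ℝ) y with hpy | hpy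
    · have hout : ¬(√2 ^ a < (p : ℝ) ∧ (p : ℝ) < √2 ^ (a + 2)) := fun h ↦ hp <|
        Finset.mem_filter.2 ⟨Finset.mem_Ico.2 ⟨(hΛH p h.1 h.2 hpy).1, Nat.lt_ceil.2 hpy⟩, hprime⟩
      simp [hψ.partitionWeight_div_pow_eq_zero hout]
    · have hle : 1 - log p / log y ≤ 0 :=
        sub_nonpos.2 ((one_le_div (log_pos hy)).2 (log_le_log (by linarith) hpy))
      exact mul_nonpos_of_nonpos_of_nonneg
        (mul_nonpos_of_nonneg_of_nonpos (hψ.partitionWeight_nonneg _) hle) (by positivity)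
  · obtain ⟨hp, hprime⟩ := Finset.mem_filter.1 hp
    have hpy := Nat.lt_ceil.1 (Finset.mem_Ico.1 hp).2
    rw [if_pos hprime]
    by_cases hin : √2 ^ a < (p : ℝ) ∧ (p : ℝ) < √2 ^ (a + 2)
    · have hΛp := (hΛH p hin.1 hin.2 hpy).2
      have hweight := hψ.partitionWeight_nonneg (p / √2 ^ a)
      have hlog := (one_sub_log_div_log_nonneg_iff hprime hy).2 hpy.le
      calc _ = partitionWeight ψ (p / √2 ^ a) * (1 / p * ((1 - log p / log y) * Λ)) := by ring
        _ ≤ _ := by gcongr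
    · simp [hψ.partitionWeight_div_pow_eq_zero hin]

/-- The weights of `p` over all `a` add up to at most one, so a bound `Λ a ≤ H p` that is uniform in
the `a` resolving `p` removes the sum over `a`. -/
theorem IsSqrtTwoStep.richertWeightedSum_le {ψ : ℝ → ℝ} (hψ : IsSqrtTwoStep ψ) {y z : ℝ} {p₀ : ℕ}
    {Λ H : ℕ → ℝ} (hy : 1 < y) (hΛ : ∀ a, 0 ≤ Λ a)
    (hH : ∀ p ∈ Finset.Ico p₀ ⌈y⌉₊, 0 ≤ H p)
    (hΛH : ∀ a p : ℕ, ⌊log z / log √2⌋₊ - 2 ≤ a → √2 ^ a < p → p < √2 ^ (a + 2) → p < y →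
      p₀ ≤ p ∧ Λ a ≤ H p) :
    richertWeightedSum z y ψ Λ ≤
      ∑ p ∈ Finset.Ico p₀ ⌈y⌉₊ with p.Prime, 1 / (p : ℝ) * ((1 - log p / log y) * H p) := by
  set S := {p ∈ Finset.Ico p₀ ⌈y⌉₊ | p.Prime}
  set G : ℕ → ℝ := fun p ↦ 1 / (p : ℝ) * ((1 - log p / log y) * H p)
  have hG : ∀ p ∈ S, 0 ≤ G p := fun p hp ↦ by
    obtain ⟨hpy, hprime⟩ := Finset.mem_filter.1 hp
    have hle := (one_sub_log_div_log_nonneg_iff hprime hy).2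
      (Nat.lt_ceil.1 (Finset.mem_Ico.1 hpy).2).le
    exact mul_nonneg (by positivity) (mul_nonneg hle (hH p hpy))
  calc richertWeightedSum z y ψ Λ
      ≤ ∑ a ∈ Finset.Icc (⌊log z / log √2⌋₊ - 2) ⌊log y / log √2⌋₊,
          ∑ p ∈ S, partitionWeight ψ (p / √2 ^ a) * G p := by
        refine Finset.sum_le_sum fun a ha ↦ hψ.tsum_partitionWeight_le hy (hΛ a) fun p ↦ ?_
        exact hΛH a p (Finset.mem_Icc.1 ha).1
    _ = ∑ p ∈ S, (∑ a ∈ Finset.Icc (⌊log z / log √2⌋₊ - 2) ⌊log y / log √2⌋₊,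
          partitionWeight ψ (p / √2 ^ a)) * G p := by
        rw [Finset.sum_comm]
        simp only [Finset.sum_mul]
    _ ≤ ∑ p ∈ S, G p := Finset.sum_le_sum fun p hp ↦
        mul_le_of_le_one_left (hG p hp) (hψ.sum_partitionWeight_le_one _ _ _)

theorem ceil_div_three_le_of_sqrt_two_pow_lt {z : ℝ} {a p : ℕ} (hz : 0 < z)
    (ha : ⌊log z / log √2⌋₊ - 2 ≤ a) (hp : √2 ^ a < p) : ⌈z / 3⌉₊ ≤ p := by
  have hlog : log z / log √2 < (a + 3 : ℕ) :=
    (Nat.lt_floor_add_one _).trans_le (by exact_mod_cast (by lia))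
  rw [div_lt_iff₀ (log_pos (lt_sqrt_of_sq_lt (by norm_num))), ← log_pow,
    log_lt_log_iff hz (by positivity)] at hlog
  have hcube : √2 ^ 3 ≤ 3 := by
    rw [pow_succ, sq_sqrt zero_le_two]
    linarith [sqrt_two_lt_three_halves]
  have hle : z ≤ 3 * p := calc
    z ≤ √2 ^ a * √2 ^ 3 := by rw [← pow_add]; exact hlog.le
    _ ≤ p * 3 := by gcongr
    _ = 3 * p := mul_comm _ _
  exact Nat.ceil_le.2 (by linarith)

theorem log_div_sqrt_two_pow_mem_Icc {D p : ℝ} {a : ℕ} (hD : 0 < D) (hlo : √2 ^ a < p)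
    (hhi : p < √2 ^ (a + 2)) :
    log (D / √2 ^ (a + 2)) ∈ Icc (log D - log 2 - log p) (log D - log p) := by
  have hp : 0 < p := lt_trans (by positivity) hlo
  have hpow : √2 ^ (a + 2) ≤ 2 * p := by
    rw [pow_add, sq_sqrt zero_le_two]
    linarith
  rw [log_div hD.ne' (by positivity), sub_sub, ← log_mul two_ne_zero hp.ne']
  exact ⟨sub_le_sub_left (log_le_log (by positivity) hpow) _,
    sub_le_sub_left (log_le_log hp hhi.le) _⟩

theorem LinearSieveBound.sieveSum_div_sqrt_two_pow_le {c ε D : ℝ} {m N n p₀ p a : ℕ} (hc : 0 < c)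
    (h : LinearSieveBound c m N ε) (hm : 2 ≤ m) (hmn : m ≤ n) (hD : log D ≤ N * log m)
    (hp₀ : 0 < p₀) (hp₀p : p₀ ≤ p) (hpD : 2 * m * p ≤ D) (hlo : √2 ^ a < p)
    (hhi : p < √2 ^ (a + 2)) :
    sieveSum m 2 n true (D / √2 ^ (a + 2)) ≤
      log m / c * upperSieveIntegral ((log D - log p₀) / log n) *
        (1 / (log D - log 2 - log p)) + ε := by
  have hm0 : (1 : ℝ) < m := by exact_mod_cast hm
  have hp0 : (0 : ℝ) < p := by exact_mod_cast hp₀.trans_le hp₀p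
  have hD0 : 0 < D := lt_of_lt_of_le (by positivity) hpD
  obtain ⟨hlow, hupp⟩ := log_div_sqrt_two_pow_mem_Icc hD0 hlo hhi
  set Da := D / √2 ^ (a + 2)
  have hlogm : log 2 + log m + log p ≤ log D := by
    rw [← log_mul two_ne_zero (by positivity), ← log_mul (by positivity) hp0.ne']
    exact log_le_log (by positivity) hpD
  have hlogm0 : 0 < log m := log_pos hm0
  have hQ : 0 < log D - log 2 - log p := by linarith
  have hmDa : (m : ℝ) ≤ Da := by
    rw [← log_le_log_iff (by positivity) (by positivity)]
    linarith
  have hlogp : log p₀ ≤ log p := monotone_log_natCast hp₀p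
  have hmono : upperSieveIntegral (log Da / log n) ≤
      upperSieveIntegral ((log D - log p₀) / log n) := monotone_upperSieveIntegral
    (div_le_div_of_nonneg_right (by linarith) (log_natCast_nonneg n))
  calc sieveSum m 2 n true Da
      ≤ log m / (c * log Da) * upperSieveIntegral (log Da / log n) + ε :=
        (h n Da hmn hmDa (by linarith [log_natCast_nonneg p])).1
    _ ≤ log m / (c * (log D - log 2 - log p)) *
          upperSieveIntegral ((log D - log p₀) / log n) + ε := by
        have _hA := zero_le_one.trans (one_le_upperSieveIntegral (log Da / log n))
        gcongr
    _ = _ := by rw [← div_div, mul_one_div, div_mul_eq_mul_div]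

theorem IsSqrtTwoStep.richertWeightedSum_sieveSum_le {ψ : ℝ → ℝ} (hψ : IsSqrtTwoStep ψ)
    {c ε y z D : ℝ} {m N n : ℕ} (hc : 0 < c) (hε : 0 ≤ ε) (h : LinearSieveBound c m N ε)
    (hm : 2 ≤ m) (hmn : m ≤ n) (hD : log D ≤ N * log m) (hz : 0 < z) (hy : 1 < y)
    (hyD : 2 * m * y ≤ D) :
    richertWeightedSum z y ψ (fun a ↦ sieveSum m 2 n true (D / √2 ^ (a + 2))) ≤
      log m / c * upperSieveIntegral ((log D - log ⌈z / 3⌉₊) / log n) *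
        ∑ p ∈ Finset.Ico ⌈z / 3⌉₊ ⌈y⌉₊ with p.Prime, log p / p *
          ((1 - log p / log ⌈y⌉₊) / (log p * (log D - log 2 - log p))) +
      ε * ∑ p ∈ Finset.Ico ⌈z / 3⌉₊ ⌈y⌉₊ with p.Prime, 1 / (p : ℝ) := by
  set p₀ := ⌈z / 3⌉₊
  have hp₀ : 0 < p₀ := Nat.ceil_pos.2 (by positivity)
  have hm0 : (1 : ℝ) < m := by exact_mod_cast hm
  have hlogm : 0 < log m := log_pos hm0
  set A₀ := upperSieveIntegral ((log D - log p₀) / log n)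
  have hA₀ : 0 ≤ A₀ := zero_le_one.trans (one_le_upperSieveIntegral _)
  have hpD {p : ℝ} (hp : p < y) : 2 * m * p ≤ D := le_trans (by gcongr) hyD
  have hQ {p : ℕ} (hp : p ∈ Finset.Ico p₀ ⌈y⌉₊) : 0 < log D - log 2 - log p := by
    obtain ⟨hp₀p, hpy⟩ := Finset.mem_Ico.1 hp
    have hp0 : (0 : ℝ) < p := by exact_mod_cast hp₀.trans_le hp₀p
    have hlog := log_le_log (by positivity) (hpD (Nat.lt_ceil.1 hpy))
    rw [log_mul (by positivity) hp0.ne', log_mul two_ne_zero (by positivity)] at hlog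
    linarith
  refine (hψ.richertWeightedSum_le (p₀ := p₀)
    (H := fun p ↦ log m / c * A₀ * (1 / (log D - log 2 - log p)) + ε) hy
    (fun a ↦ (sieveSum_true_pos _ _ _ _).le) (fun p hp ↦ ?_) fun a p ha hlo hhi hpy ↦ ?_).trans ?_
  · have := hQ hp
    positivity
  · have hp₀p := ceil_div_three_le_of_sqrt_two_pow_lt hz ha hlo
    exact ⟨hp₀p, h.sieveSum_div_sqrt_two_pow_le hc hm hmn hD hp₀ hp₀p (hpD hpy) hlo hhi⟩
  · rw [Finset.mul_sum, Finset.mul_sum, ← Finset.sum_add_distrib]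
    refine Finset.sum_le_sum fun p hp ↦ ?_
    obtain ⟨hpmem, hprime⟩ := Finset.mem_filter.1 hp
    have hlogp : 0 < log p := log_pos (by exact_mod_cast hprime.one_lt)
    have hlogy : 0 < log y := log_pos hy
    have hceil : log y ≤ log ⌈y⌉₊ := log_le_log (by linarith) (Nat.le_ceil y)
    have hQp := hQ hpmem
    have hle : 1 - log p / log y ≤ 1 - log p / log ⌈y⌉₊ := by gcongr
    have hle1 : 1 - log p / log y ≤ 1 := sub_le_self _ (by positivity)
    calc _ = 1 / (p : ℝ) * (log m / c * A₀ / (log D - log 2 - log p) * (1 - log p / log y)) +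
          1 / (p : ℝ) * (ε * (1 - log p / log y)) := by ring
      _ ≤ 1 / (p : ℝ) * (log m / c * A₀ / (log D - log 2 - log p) * (1 - log p / log ⌈y⌉₊)) +
          1 / (p : ℝ) * (ε * 1) := by gcongr
      _ = _ := by field_simp

end WeightedSum

section Asymptotics

open Real Set Filter Topology

/-- The integral to which partial summation reduces the sum over primes in Richert's weighted sieve;
`t`, `y`, `q` are the logarithms of the two ends of the sum and of the level. -/
noncomputable def richertIntegral (t y q : ℝ) : ℝ :=
  ∫ u in t..y, (1 - u / y) / (u * (q - u))

theorem richertIntegral_eq {t y q : ℝ} (ht : 0 < t) (hty : t ≤ y) (hyq : y < q) :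
    richertIntegral t y q =
      1 / q * log (y / t) + (1 / y - 1 / q) * log ((q - y) / (q - t)) := by
  have hy : 0 < y := ht.trans_le hty
  have hq : 0 < q := hy.trans hyq
  have hpos {u : ℝ} (hu : u ∈ Icc t y) : u ≠ 0 ∧ q - u ≠ 0 :=
    ⟨(ht.trans_le hu.1).ne', (sub_pos.2 (hu.2.trans_lt hyq)).ne'⟩
  have hderiv : ∀ u ∈ uIcc t y, HasDerivAt
      (fun u ↦ 1 / q * log u + (1 / y - 1 / q) * log (q - u)) ((1 - u / y) / (u * (q - u))) u := by
    intro u hu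
    rw [uIcc_of_le hty] at hu
    obtain ⟨hu0, hqu⟩ := hpos hu
    refine (((hasDerivAt_log hu0).const_mul _).add
      ((((hasDerivAt_id u).const_sub q).log hqu).const_mul _)).congr_deriv ?_
    simp only [id_eq]
    field_simp
    ring
  have hint : IntervalIntegrable (fun u ↦ (1 - u / y) / (u * (q - u)))
      MeasureTheory.volume t y := by
    refine ContinuousOn.intervalIntegrable ?_
    rw [uIcc_of_le hty]
    exact ContinuousOn.div (by fun_prop) (by fun_prop)
      fun u hu ↦ mul_ne_zero (hpos hu).1 (hpos hu).2
  rw [richertIntegral, intervalIntegral.integral_eq_sub_of_hasDerivAt hderiv hint,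
    log_div hy.ne' ht.ne', log_div (by linarith) (by linarith)]
  ring

theorem mul_richertIntegral_mul {L : ℝ} (hL : L ≠ 0) (t y q : ℝ) :
    L * richertIntegral (L * t) (L * y) (L * q) = richertIntegral t y q := by
  rw [richertIntegral, richertIntegral, ← intervalIntegral.mul_integral_comp_mul_left, ← mul_assoc,
    ← intervalIntegral.integral_const_mul]
  refine intervalIntegral.integral_congr fun u _ ↦ ?_
  rw [mul_div_mul_left _ _ hL, ← mul_sub, mul_mul_mul_comm, ← mul_div_assoc,
    mul_div_mul_left _ _ (mul_ne_zero hL hL)]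

theorem tendsto_richertIntegral {ι : Type*} {l : Filter ι} {f g h : ι → ℝ} {t y q : ℝ}
    (ht : 0 < t) (hty : t < y) (hyq : y < q) (hf : Tendsto f l (𝓝 t)) (hg : Tendsto g l (𝓝 y))
    (hh : Tendsto h l (𝓝 q)) :
    Tendsto (fun i ↦ richertIntegral (f i) (g i) (h i)) l (𝓝 (richertIntegral t y q)) := by
  have hy : 0 < y := ht.trans hty
  have hq : 0 < q := hy.trans hyq
  rw [richertIntegral_eq ht hty.le hyq]
  have hinv_q := (tendsto_const_nhds (x := (1 : ℝ))).div hh hq.ne'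
  have hinv_y := (tendsto_const_nhds (x := (1 : ℝ))).div hg hy.ne'
  have hlog_y := (hg.div hf ht.ne').log (div_pos hy ht).ne'
  have hlog_q := ((hh.sub hg).div (hh.sub hf) (by linarith)).log
    (div_pos (sub_pos.2 hyq) (by linarith)).ne'
  refine ((hinv_q.mul hlog_y).add ((hinv_y.sub hinv_q).mul hlog_q)).congr' ?_
  filter_upwards [hf.eventually_const_lt ht, hf.eventually_lt hg hty, hg.eventually_lt hh hyq]
    with i hi hfg hgh
  exact (richertIntegral_eq hi hfg.le hgh).symm

theorem antitoneOn_richertIntegrand {y q : ℝ} (hyq : y < q) :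
    AntitoneOn (fun u ↦ (1 - u / y) / (u * (q - u))) (Ioc 0 y) := by
  intro a ha b hb hab
  have hy : 0 < y := ha.1.trans_le ha.2
  have ha0 := ha.1
  have hqa : 0 < q - a := sub_pos.2 (ha.2.trans_lt hyq)
  have hqb : 0 < q - b := sub_pos.2 (hb.2.trans_lt hyq)
  have hratio : (1 - b / y) / (q - b) ≤ (1 - a / y) / (q - a) := by
    rw [div_le_div_iff₀ hqb hqa, ← sub_nonneg]
    have heq : (1 - a / y) * (q - b) - (1 - b / y) * (q - a) = (b - a) * (q - y) / y := by
      field_simp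
      ring
    rw [heq]
    exact div_nonneg (mul_nonneg (sub_nonneg.2 hab) (by linarith)) hy.le
  have hnonneg : 0 ≤ (1 - b / y) / (q - b) :=
    div_nonneg (sub_nonneg.2 ((div_le_one hy).2 hb.2)) hqb.le
  simp only
  rw [mul_comm b, mul_comm a, ← div_div, ← div_div]
  exact div_le_div₀ (hnonneg.trans hratio) hratio ha0 hab

theorem exists_sum_richertIntegrand_le :
    ∃ C : ℝ, 0 ≤ C ∧ ∀ (m n : ℕ) (q : ℝ), 2 ≤ m → m ≤ n → log n < q →
      ∑ p ∈ Finset.Ico m n with p.Prime,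
        log p / p * ((1 - log p / log n) / (log p * (q - log p))) ≤
      richertIntegral (log m) (log n) q +
        C * ((1 - log m / log n) / (log m * (q - log m))) := by
  obtain ⟨C, hC, h⟩ := exists_abs_sum_log_div_mul_sub_integral_le
  refine ⟨C, hC, fun m n q hm hmn hq ↦ ?_⟩
  have hlogm : 0 < log m := log_pos (by exact_mod_cast hm)
  have hlogn : 0 < log n := hlogm.trans_le (monotone_log_natCast hmn)
  have hmain := (abs_le.1 (h m n hm hmn (fun u ↦ (1 - u / log n) / (u * (q - u)))
    ((antitoneOn_richertIntegrand hq).mono fun u hu ↦ ⟨hlogm.trans_le hu.1, hu.2⟩)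
    (by simp [div_self hlogn.ne']))).2
  rwa [sub_le_iff_le_add'] at hmain

theorem tendsto_log_ceil_rpow_div_div_log {e k : ℝ} (he : 0 < e) (hk : 0 < k) :
    Tendsto (fun X : ℝ ↦ log ⌈X ^ e / k⌉₊ / log X) atTop (𝓝 e) := by
  have hpow : Tendsto (fun X : ℝ ↦ X ^ e / k) atTop atTop :=
    (tendsto_rpow_atTop he).atTop_div_const hk
  have hceil : Tendsto (fun X : ℝ ↦ log (⌈X ^ e / k⌉₊ / (X ^ e / k)) - log k) atTop
      (𝓝 (log 1 - log k)) :=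
    (((tendsto_nat_ceil_div_atTop (R := ℝ)).comp hpow).log one_ne_zero).sub_const _
  have hlim := (hceil.div_atTop tendsto_log_atTop).const_add e
  rw [add_zero] at hlim
  refine hlim.congr' ?_
  filter_upwards [eventually_gt_atTop 1] with X hX
  have hX0 : 0 < X := one_pos.trans hX
  have hpos : 0 < X ^ e / k := by positivity
  have hlogX : log X ≠ 0 := (log_pos hX).ne'
  rw [log_div (by exact_mod_cast (Nat.ceil_pos.2 hpos).ne') hpos.ne',
    log_div (by positivity) hk.ne', log_rpow hX0]
  field_simp
  ring

theorem tendsto_log_ceil_rpow_div_log {e : ℝ} (he : 0 < e) :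
    Tendsto (fun X : ℝ ↦ log ⌈X ^ e⌉₊ / log X) atTop (𝓝 e) := by
  simpa only [div_one] using tendsto_log_ceil_rpow_div_div_log he one_pos

theorem eventually_le_rpow_of_tendsto {f : ℝ → ℝ} {a v : ℝ}
    (hf : Tendsto (fun X ↦ log (f X) / log X) atTop (𝓝 a)) (hav : a < v) :
    ∀ᶠ X in atTop, f X ≤ X ^ v := by
  filter_upwards [hf.eventually_lt_const hav, eventually_gt_atTop 1] with X hX hX1
  have hX0 : 0 < X := one_pos.trans hX1
  rcases le_or_gt (f X) 0 with h | h
  · exact h.trans (by positivity)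
  · rw [div_lt_iff₀ (log_pos hX1), ← log_rpow hX0, log_lt_log_iff h (by positivity)] at hX
    exact hX.le

end Asymptotics

section LinearSieveAsymptotics

open Real Filter Topology

theorem log_rpow_le_natCeil_div_mul_log {δ v X : ℝ} (hδ : 0 < δ) (hX : 1 ≤ X) :
    log (X ^ v) ≤ ⌈v / δ⌉₊ * log ⌈X ^ δ⌉₊ := by
  have hX0 : 0 < X := one_pos.trans_le hX
  have hlogX : 0 ≤ log X := log_nonneg hX
  have hceil : δ * log X ≤ log ⌈X ^ δ⌉₊ := by
    rw [← log_rpow hX0]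
    exact log_le_log (by positivity) (Nat.le_ceil _)
  calc log (X ^ v) = v / δ * (δ * log X) := by
        rw [log_rpow hX0]
        field_simp
    _ ≤ ⌈v / δ⌉₊ * log ⌈X ^ δ⌉₊ := by
        gcongr
        exact Nat.le_ceil _

theorem tendsto_log_rpow_div_log (v : ℝ) :
    Tendsto (fun X : ℝ ↦ log (X ^ v) / log X) atTop (𝓝 v) :=
  tendsto_const_nhds.congr' <| by
    filter_upwards [eventually_gt_atTop 1] with X hX
    rw [log_rpow (one_pos.trans hX), mul_div_cancel_right₀ _ (log_pos hX).ne']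

theorem tendsto_log_rpow_sub_div_log (v k : ℝ) :
    Tendsto (fun X : ℝ ↦ (log (X ^ v) - k) / log X) atTop (𝓝 v) := by
  simpa only [sub_div, sub_zero] using
    (tendsto_log_rpow_div_log v).sub (tendsto_log_atTop.const_div_atTop k)

theorem tendsto_log_ceil_div_mul_comp {g : ℝ → ℝ} (hg : Continuous g) {δ u v : ℝ} (hδ : 0 < δ)
    (hu : 0 < u) (hv : v ≠ 0) (c : ℝ) :
    Tendsto (fun X : ℝ ↦ log ⌈X ^ δ⌉₊ / (c * log (X ^ v)) * g (log (X ^ v) / log ⌈X ^ u⌉₊)) atTop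
      (𝓝 (δ * (g (v / u) / (v * c)))) := by
  have hnum := tendsto_log_rpow_div_log v
  have hlim := ((((tendsto_log_ceil_rpow_div_log hδ).div hnum hv).div_const c).mul
    ((hg.tendsto _).comp (hnum.div (tendsto_log_ceil_rpow_div_log hu) hu.ne'))).congr' <| by
      filter_upwards [eventually_gt_atTop 1] with X hX
      have hlogX : log X ≠ 0 := (log_pos hX).ne'
      simp only [Pi.div_apply, Function.comp_apply]
      rw [div_div_div_cancel_right₀ hlogX, div_div_div_cancel_right₀ hlogX, div_div,
        mul_comm _ c]
  convert hlim using 2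
  field_simp

variable {c δ u v η : ℝ} (hc : 0 < c) (hcf : ∀ s, 1 ≤ s → lowerSieveFun s ≤ c)
  (hcF : ∀ s, 1 ≤ s → c ≤ upperSieveFun s) (hδ : 0 < δ) (hδu : δ ≤ u) (hη : 0 < η)

include hc hcf hcF hδ in
theorem eventually_linearSieveBound_ceil_rpow (N : ℕ) {ε : ℝ} (hε : 0 < ε) :
    ∀ᶠ X : ℝ in atTop, 2 ≤ ⌈X ^ δ⌉₊ ∧ LinearSieveBound c ⌈X ^ δ⌉₊ N ε := by
  have hm : Tendsto (fun X : ℝ ↦ ⌈X ^ δ⌉₊) atTop atTop :=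
    tendsto_nat_ceil_atTop.comp (tendsto_rpow_atTop hδ)
  exact (hm.eventually_ge_atTop 2).and
    (hm.eventually (eventually_linearSieveBound hc hcf hcF N hε))

theorem ceil_rpow_le_ceil_rpow {X : ℝ} (hδu : δ ≤ u) (hX : 1 ≤ X) : ⌈X ^ δ⌉₊ ≤ ⌈X ^ u⌉₊ :=
  Nat.ceil_le_ceil (rpow_le_rpow_of_exponent_le hX hδu)

include hc hcf hcF hδ hδu hη in
theorem eventually_sieveSum_true_le (hδv : δ < v) :
    ∀ᶠ X : ℝ in atTop, sieveSum ⌈X ^ δ⌉₊ 2 ⌈X ^ u⌉₊ true (X ^ v) ≤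
      δ * (upperSieveIntegral (v / u) / (v * c) + η) := by
  have hv : 0 < v := hδ.trans hδv
  filter_upwards [eventually_linearSieveBound_ceil_rpow hc hcf hcF hδ ⌈v / δ⌉₊
      (show 0 < δ * η / 2 by positivity),
    eventually_le_rpow_of_tendsto (tendsto_log_ceil_rpow_div_log hδ) hδv,
    (tendsto_log_ceil_div_mul_comp continuous_upperSieveIntegral hδ (hδ.trans_le hδu) hv.ne'
      c).eventually_lt_const (lt_add_of_pos_right _ (show 0 < δ * η / 2 by positivity)),
    eventually_ge_atTop 1] with X hbound hmD hlim hX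
  have hsum := (hbound.2 ⌈X ^ u⌉₊ _ (ceil_rpow_le_ceil_rpow hδu hX) hmD
    (log_rpow_le_natCeil_div_mul_log hδ hX)).1
  linarith

include hc hcf hcF hδ hδu hη in
theorem eventually_le_sieveSum_false (huv : 2 * u < v) :
    ∀ᶠ X : ℝ in atTop, δ * (lowerSieveIntegral (v / u) / (v * c) - η) ≤
      sieveSum ⌈X ^ δ⌉₊ 2 ⌈X ^ u⌉₊ false (X ^ v) := by
  have hu : 0 < u := hδ.trans_le hδu
  have hv : 0 < v := by linarith
  have hsq : Tendsto (fun X : ℝ ↦ log ((⌈X ^ u⌉₊ : ℝ) ^ 2) / log X) atTop (𝓝 (2 * u)) :=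
    ((tendsto_log_ceil_rpow_div_log hu).const_mul 2).congr fun X ↦ by
      rw [log_pow, mul_div_assoc, Nat.cast_ofNat]
  filter_upwards [eventually_linearSieveBound_ceil_rpow hc hcf hcF hδ ⌈v / δ⌉₊
      (show 0 < δ * η / 2 by positivity),
    eventually_le_rpow_of_tendsto (tendsto_log_ceil_rpow_div_log hδ) (show δ < v by linarith),
    eventually_le_rpow_of_tendsto hsq huv,
    (tendsto_log_ceil_div_mul_comp continuous_lowerSieveIntegral hδ hu hv.ne'
      c).eventually_const_lt (sub_lt_self _ (show 0 < δ * η / 2 by positivity)),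
    eventually_ge_atTop 1] with X hbound hmD hnD hlim hX
  have hsum := (hbound.2 ⌈X ^ u⌉₊ _ (ceil_rpow_le_ceil_rpow hδu hX) hmD
    (log_rpow_le_natCeil_div_mul_log hδ hX)).2 hnD
  linarith

theorem mul_richertIntegral_add_mul {L : ℝ} (hL : L ≠ 0) (C t y q : ℝ) :
    L * (richertIntegral t y q + C * ((1 - t / y) / (t * (q - t)))) =
      richertIntegral (t / L) (y / L) (q / L) +
        C * ((1 - t / L / (y / L)) / (t / L * (q / L - t / L))) / L := by
  have hint := mul_richertIntegral_mul hL (t / L) (y / L) (q / L)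
  rw [mul_div_cancel₀ t hL, mul_div_cancel₀ y hL, mul_div_cancel₀ q hL] at hint
  rw [mul_add, hint, div_div_div_cancel_right₀ hL]
  congr 1
  field_simp

/-- Here `t`, `y`, `q` play the part of the logarithms in `exists_sum_richertIntegrand_le`, whose
error term is of smaller order. -/
theorem tendsto_mul_richertIntegral_add_mul {f g h : ℝ → ℝ} {t y q : ℝ} (ht : 0 < t) (hty : t < y)
    (hyq : y < q) (hf : Tendsto (fun X ↦ f X / log X) atTop (𝓝 t))
    (hg : Tendsto (fun X ↦ g X / log X) atTop (𝓝 y))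
    (hh : Tendsto (fun X ↦ h X / log X) atTop (𝓝 q)) (C : ℝ) :
    Tendsto (fun X ↦ log X * (richertIntegral (f X) (g X) (h X) +
      C * ((1 - f X / g X) / (f X * (h X - f X))))) atTop (𝓝 (richertIntegral t y q)) := by
  have hy : 0 < y := ht.trans hty
  have herror := ((((hf.div hg hy.ne').const_sub 1).div (hf.mul (hh.sub hf))
    (mul_pos ht (by linarith)).ne').const_mul C).div_atTop tendsto_log_atTop
  have hlim := (tendsto_richertIntegral ht hty hyq hf hg hh).add herror
  rw [add_zero] at hlim
  refine hlim.congr' ?_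
  filter_upwards [eventually_gt_atTop 1] with X hX
  exact (mul_richertIntegral_add_mul (log_pos hX).ne' C _ _ _).symm

theorem tendsto_richertIntegral_main_term {t : ℝ} (hδ : 0 < δ) (hu : 0 < u) (hut : u < t)
    (htv : t < v) (c C : ℝ) :
    Tendsto (fun X : ℝ ↦ log ⌈X ^ δ⌉₊ / c *
      upperSieveIntegral ((log (X ^ v) - log ⌈X ^ u / 3⌉₊) / log ⌈X ^ u⌉₊) *
      (richertIntegral (log ⌈X ^ u / 3⌉₊) (log ⌈X ^ t⌉₊) (log (X ^ v) - log 2) +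
        C * ((1 - log ⌈X ^ u / 3⌉₊ / log ⌈X ^ t⌉₊) /
          (log ⌈X ^ u / 3⌉₊ * (log (X ^ v) - log 2 - log ⌈X ^ u / 3⌉₊)))))
      atTop (𝓝 (δ * (upperSieveIntegral (v / u - 1) * richertIntegral u t v / c))) := by
  have hv := tendsto_log_rpow_div_log v
  have hp₀ := tendsto_log_ceil_rpow_div_div_log hu three_pos
  have hA := (continuous_upperSieveIntegral.tendsto _).comp
    ((hv.sub hp₀).div (tendsto_log_ceil_rpow_div_log hu) hu.ne')
  have hint := tendsto_mul_richertIntegral_add_mul hu hut htv hp₀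
    (tendsto_log_ceil_rpow_div_log (hu.trans hut)) (tendsto_log_rpow_sub_div_log v (log 2)) C
  have hlim := (((tendsto_log_ceil_rpow_div_log hδ).div_const c).mul hA).mul hint
  rw [sub_div, div_self hu.ne'] at hlim
  convert hlim.congr' _ using 2
  · ring
  · filter_upwards [eventually_gt_atTop 1] with X hX
    have hlogX : log X ≠ 0 := (log_pos hX).ne'
    simp only [Pi.div_apply, Function.comp_apply]
    rw [← sub_div, div_div_div_cancel_right₀ hlogX]
    field_simp

theorem exists_eventually_sum_one_div_prime_le {t : ℝ} (hu : 0 < u) (hut : u < t) :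
    ∃ B : ℝ, 0 < B ∧ ∀ᶠ X : ℝ in atTop,
      ∑ p ∈ Finset.Ico ⌈X ^ u / 3⌉₊ ⌈X ^ t⌉₊ with p.Prime, 1 / ((p : ℕ) : ℝ) ≤ B := by
  obtain ⟨C, hC, hsum⟩ := exists_sum_one_div_prime_le
  set N := ⌊t / u⌋₊ + 1
  refine ⟨log N + C, add_pos_of_nonneg_of_pos (log_natCast_nonneg N) hC, ?_⟩
  have hceil := tendsto_log_ceil_rpow_div_div_log hu three_pos
  have hlog := (tendsto_log_ceil_rpow_div_log (hu.trans hut)).eventually_lt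
    (hceil.const_mul (N : ℝ)) ((div_lt_iff₀ hu).1 (Nat.lt_succ_floor (t / u)))
  have hm : Tendsto (fun X : ℝ ↦ ⌈X ^ u / 3⌉₊) atTop atTop :=
    tendsto_nat_ceil_atTop.comp ((tendsto_rpow_atTop hu).atTop_div_const three_pos)
  filter_upwards [hlog, hceil.eventually_lt (tendsto_log_ceil_rpow_div_log (hu.trans hut)) hut,
    hm.eventually_ge_atTop 2, eventually_gt_atTop 1] with X hN hle hm2 hX
  have hlogX := log_pos hX
  rw [← mul_div_assoc, div_lt_div_iff_of_pos_right hlogX] at hN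
  rw [div_lt_div_iff_of_pos_right hlogX,
    log_lt_log_iff (by positivity) (by positivity)] at hle
  refine sum_one_div_prime_le_of_forall (m := ⌈X ^ u / 3⌉₊) (fun p hp ↦ ?_)
    (hsum N _ ⌈X ^ t⌉₊ (Nat.succ_ne_zero _) hm2 hle.le hN.le)
  obtain ⟨hp, hprime⟩ := Finset.mem_filter.1 hp
  exact ⟨hprime, (Finset.mem_Ico.1 hp).1, by exact_mod_cast (Finset.mem_Ico.1 hp).2.le⟩

theorem eventually_two_mul_ceil_rpow_mul_rpow_le {t : ℝ} (hδ : 0 < δ) (htv : δ + t < v) :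
    ∀ᶠ X : ℝ in atTop, 2 * (⌈X ^ δ⌉₊ : ℝ) * X ^ t ≤ X ^ v := by
  refine eventually_le_rpow_of_tendsto (((tendsto_log_ceil_rpow_div_log hδ).add
    (tendsto_log_rpow_sub_div_log t (-log 2))).congr' ?_) htv
  filter_upwards [eventually_gt_atTop 1] with X hX
  have _hX0 : 0 < X := one_pos.trans hX
  have hm : (⌈X ^ δ⌉₊ : ℝ) ≠ 0 := by positivity
  rw [log_mul (by positivity) (by positivity), log_mul two_ne_zero hm]
  ring

theorem eventually_two_le_ceil_rpow_and_log_lt {t : ℝ} (hu : 0 < u) (hut : u < t) (htv : t < v) :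
    ∀ᶠ X : ℝ in atTop, 2 ≤ ⌈X ^ u / 3⌉₊ ∧ ⌈X ^ u / 3⌉₊ ≤ ⌈X ^ t⌉₊ ∧
      log ⌈X ^ t⌉₊ < log (X ^ v) - log 2 := by
  have hm : Tendsto (fun X : ℝ ↦ ⌈X ^ u / 3⌉₊) atTop atTop :=
    tendsto_nat_ceil_atTop.comp ((tendsto_rpow_atTop hu).atTop_div_const three_pos)
  filter_upwards [hm.eventually_ge_atTop 2, (tendsto_log_ceil_rpow_div_log
    (hu.trans hut)).eventually_lt (tendsto_log_rpow_sub_div_log v (log 2)) htv,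
    eventually_gt_atTop 1] with X hX2 hlog hX
  have hpow : X ^ u / 3 ≤ X ^ t := calc
    X ^ u / 3 ≤ X ^ u := div_le_self (by positivity) (by norm_num)
    _ ≤ X ^ t := rpow_le_rpow_of_exponent_le hX.le hut.le
  exact ⟨hX2, Nat.ceil_le_ceil hpow, (div_lt_div_iff_of_pos_right (log_pos hX)).1 hlog⟩

include hc hcf hcF hδ hδu hη in
theorem eventually_richertWeightedSum_sieveSum_le {t : ℝ} (hut : u < t) (htv : δ + t < v) :
    ∀ᶠ X : ℝ in atTop, ∀ ψ, IsSqrtTwoStep ψ →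
      richertWeightedSum (X ^ u) (X ^ t) ψ
          (fun a ↦ sieveSum ⌈X ^ δ⌉₊ 2 ⌈X ^ u⌉₊ true (X ^ v / √2 ^ (a + 2))) ≤
        δ * (upperSieveIntegral (v / u - 1) * richertIntegral u t v / c + η) := by
  have hu : 0 < u := hδ.trans_le hδu
  have htv' : t < v := by linarith
  obtain ⟨C, -, hsum⟩ := exists_sum_richertIntegrand_le
  obtain ⟨B, hB, hmertens⟩ := exists_eventually_sum_one_div_prime_le hu hut
  filter_upwards [eventually_linearSieveBound_ceil_rpow hc hcf hcF hδ ⌈v / δ⌉₊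
      (show 0 < δ * η / (2 * B) by positivity), hmertens,
    eventually_two_mul_ceil_rpow_mul_rpow_le hδ htv,
    eventually_two_le_ceil_rpow_and_log_lt hu hut htv',
    (tendsto_richertIntegral_main_term hδ hu hut htv' c C).eventually_lt_const
      (lt_add_of_pos_right _ (show 0 < δ * η / 2 by positivity)),
    eventually_gt_atTop 1] with X hbound hB' hD hp₀ hlim hX ψ hψ
  have hA := zero_le_one.trans
    (one_le_upperSieveIntegral ((log (X ^ v) - log ⌈X ^ u / 3⌉₊) / log ⌈X ^ u⌉₊))
  have hmain := hψ.richertWeightedSum_sieveSum_le hc (by positivity) hbound.2 hbound.1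
    (ceil_rpow_le_ceil_rpow hδu hX.le) (log_rpow_le_natCeil_div_mul_log hδ hX.le)
    (rpow_pos_of_pos (one_pos.trans hX) u) (one_lt_rpow hX (hu.trans hut)) hD
  have hprimes := mul_le_mul_of_nonneg_left (hsum _ _ _ hp₀.1 hp₀.2.1 hp₀.2.2)
    (mul_nonneg (div_nonneg (log_natCast_nonneg ⌈X ^ δ⌉₊) hc.le) hA)
  have herror : δ * η / (2 * B) * ∑ p ∈ Finset.Ico ⌈X ^ u / 3⌉₊ ⌈X ^ t⌉₊ with p.Prime,
      1 / ((p : ℕ) : ℝ) ≤ δ * η / 2 :=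
    (mul_le_mul_of_nonneg_left hB' (by positivity)).trans_eq (by field_simp)
  linarith

end LinearSieveAsymptotics

section MainTerm

open Real Set Filter

theorem exists_sieveSum_true_sub_false_le :
    ∃ K : ℝ, 0 < K ∧ ∀ (n : ℕ) (E : ℝ), 2 ≤ n → 1 < E → (n : ℝ) ^ 30 ≤ E →
      sieveSum 0 30 n true E - sieveSum 0 30 n false E ≤
        K * (log n / log E) ^ 10 * sieveSum 0 30 n true E := by
  obtain ⟨K, hK, hfund⟩ := exists_sieveSum_fundamental_lemma
  obtain ⟨c, _, hc, _, hprod⟩ := exists_sieveProduct_bounds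
  refine ⟨2 * K / c ^ 10, by positivity, fun n E hn hE hnE ↦ ?_⟩
  have hlogn : 0 < log n := log_pos (by exact_mod_cast hn)
  have hlogE : 0 < log E := log_pos hE
  have hV := sieveProduct_pos 0 n
  have hinv : (sieveProduct 0 n)⁻¹ ≤ log n / c :=
    inv_le_of_inv_le₀ (by positivity) (by simpa only [inv_div] using (hprod n hn).1)
  have hupper := (hfund n E hE).1
  have hlower := (hfund n E hE).2 hnE
  calc sieveSum 0 30 n true E - sieveSum 0 30 n false E
      ≤ 2 * fundamentalError K n E := by linarith
    _ = 2 * K / log E ^ 10 * (sieveProduct 0 n)⁻¹ ^ 10 * sieveProduct 0 n := by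
        rw [fundamentalError]
        field_simp
    _ ≤ 2 * K / log E ^ 10 * (log n / c) ^ 10 * sieveSum 0 30 n true E := by
        gcongr
        exact (sieveSum_false_le_sieveProduct_le_sieveSum_true 0 30 n E).2
    _ = 2 * K / c ^ 10 * (log n / log E) ^ 10 * sieveSum 0 30 n true E := by
        field_simp

theorem exists_eventually_sieveSum_true_sub_false_le {e : ℝ} (he : 0 < e) :
    ∃ K : ℝ, 0 < K ∧ ∀ δ : ℝ, 0 < δ → 30 * δ < e → ∀ᶠ X : ℝ in atTop,
      sieveSum 0 30 ⌈X ^ δ⌉₊ true (X ^ e) - sieveSum 0 30 ⌈X ^ δ⌉₊ false (X ^ e) ≤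
        K * δ * sieveSum 0 30 ⌈X ^ δ⌉₊ true (X ^ e) := by
  obtain ⟨K, hK, hsub⟩ := exists_sieveSum_true_sub_false_le
  refine ⟨2 * K / e, by positivity, fun δ hδ hδe ↦ ?_⟩
  have hlog := tendsto_log_ceil_rpow_div_log hδ
  have hpow : ∀ᶠ X : ℝ in atTop, (⌈X ^ δ⌉₊ : ℝ) ^ 30 ≤ X ^ e :=
    eventually_le_rpow_of_tendsto (by
      simpa only [log_pow, mul_div_assoc, Nat.cast_ofNat] using hlog.const_mul (30 : ℝ)) hδe
  filter_upwards [hpow, hlog.eventually_lt_const (by linarith : δ < 2 * δ),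
    (tendsto_nat_ceil_atTop.comp (tendsto_rpow_atTop hδ)).eventually_ge_atTop 2,
    eventually_gt_atTop 1] with X hXe hXδ hX2 hX
  have hlogX := log_pos hX
  refine (hsub _ _ hX2 (one_lt_rpow hX he) hXe).trans
    (mul_le_mul_of_nonneg_right ?_ (sieveSum_true_pos ..).le)
  have hratio : log ⌈X ^ δ⌉₊ / log (X ^ e) ≤ 2 * δ / e := by
    rw [log_rpow (one_pos.trans hX), div_le_div_iff₀ (by positivity) he]
    rw [div_lt_iff₀ hlogX] at hXδ
    nlinarith
  have hratio0 : 0 ≤ log ⌈X ^ δ⌉₊ / log (X ^ e) :=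
    div_nonneg (log_natCast_nonneg _) (log_nonneg (one_lt_rpow hX he).le)
  calc K * (log ⌈X ^ δ⌉₊ / log (X ^ e)) ^ 10
      ≤ K * (log ⌈X ^ δ⌉₊ / log (X ^ e)) := by
        gcongr
        exact pow_le_of_le_one hratio0
          (hratio.trans ((div_le_one he).2 (by linarith))) (by norm_num)
    _ ≤ K * (2 * δ / e) := by gcongr
    _ = 2 * K / e * δ := by ring

theorem exists_eventually_div_log_le_sieveSum_true :
    ∃ c : ℝ, 0 < c ∧ ∀ δ : ℝ, 0 < δ → ∀ᶠ X : ℝ in atTop, ∀ (β : ℕ) (E : ℝ),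
      c / (δ * log X) ≤ sieveSum 0 β ⌈X ^ δ⌉₊ true E := by
  obtain ⟨c, _, hc, _, hprod⟩ := exists_sieveProduct_bounds
  refine ⟨c / 2, by positivity, fun δ hδ ↦ ?_⟩
  filter_upwards [(tendsto_log_ceil_rpow_div_log hδ).eventually_lt_const
      (by linarith : δ < 2 * δ),
    (tendsto_nat_ceil_atTop.comp (tendsto_rpow_atTop hδ)).eventually_ge_atTop 2,
    eventually_gt_atTop 1] with X hXδ hX2 hX β E
  simp only [Function.comp_apply] at hX2
  have hlogX := log_pos hX
  have hlogm : 0 < log ⌈X ^ δ⌉₊ := log_pos (by exact_mod_cast hX2)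
  rw [div_lt_iff₀ hlogX] at hXδ
  calc c / 2 / (δ * log X) = c / (2 * δ * log X) := by rw [div_div, mul_assoc]
    _ ≤ c / log ⌈X ^ δ⌉₊ := by gcongr
    _ ≤ sieveProduct 0 ⌈X ^ δ⌉₊ := (hprod _ hX2).1
    _ ≤ sieveSum 0 β ⌈X ^ δ⌉₊ true E :=
        (sieveSum_false_le_sieveProduct_le_sieveSum_true ..).2

theorem exists_eventually_mul_le_sieveSum_sub_richertWeightedSum {u t v : ℝ} (hu : 0 < u)
    (hut : u < t) (huv : 2 * u < v)
    (hpos : upperSieveIntegral (v / u - 1) * richertIntegral u t v <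
      lowerSieveIntegral (v / u) / v) :
    ∃ γ C : ℝ, 0 < γ ∧ 0 < C ∧ ∀ δ : ℝ, 0 < δ → δ ≤ u → δ + t < v → ∀ᶠ X : ℝ in atTop,
      sieveSum ⌈X ^ δ⌉₊ 2 ⌈X ^ u⌉₊ true (X ^ v) ≤ δ * C ∧ ∀ ψ, IsSqrtTwoStep ψ →
        δ * γ ≤ sieveSum ⌈X ^ δ⌉₊ 2 ⌈X ^ u⌉₊ false (X ^ v) -
          richertWeightedSum (X ^ u) (X ^ t) ψ
            fun a ↦ sieveSum ⌈X ^ δ⌉₊ 2 ⌈X ^ u⌉₊ true (X ^ v / √2 ^ (a + 2)) := by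
  obtain ⟨c, hc, hcf, hcF⟩ := exists_lowerSieveFun_le_le_upperSieveFun
  have hv : 0 < v := by linarith
  let γ := (lowerSieveIntegral (v / u) / v - upperSieveIntegral (v / u - 1) *
    richertIntegral u t v) / c
  have hγ : 0 < γ := div_pos (sub_pos.2 hpos) hc
  have hη : 0 < γ / 4 := by positivity
  have hA : 0 < upperSieveIntegral (v / u) := one_pos.trans_le (one_le_upperSieveIntegral _)
  refine ⟨γ / 2, upperSieveIntegral (v / u) / (v * c) + 1, half_pos hγ, by positivity,
    fun δ hδ hδu hδv ↦ ?_⟩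
  filter_upwards [eventually_sieveSum_true_le hc hcf hcF hδ hδu one_pos (v := v) (by linarith),
    eventually_le_sieveSum_false hc hcf hcF hδ hδu hη huv,
    eventually_richertWeightedSum_sieveSum_le hc hcf hcF hδ hδu hη hut hδv] with X hupper hlower hT
  refine ⟨hupper, fun ψ hψ ↦ ?_⟩
  calc δ * (γ / 2) = δ * (lowerSieveIntegral (v / u) / (v * c) - γ / 4) -
        δ * (upperSieveIntegral (v / u - 1) * richertIntegral u t v / c + γ / 4) := by
        simp only [γ]
        field_simp
        ring
    _ ≤ _ := sub_le_sub hlower (hT ψ hψ)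

theorem mul_half_le_mul_sub_mul_sub {R R' P Q C K δ γ : ℝ} (hR : 0 ≤ R) (hR' : R' ≤ R)
    (hδ : 0 ≤ δ) (hC : 0 ≤ C) (hδγ : δ * (C * K) ≤ γ / 2) (hP : δ * γ ≤ P)
    (hQ : Q ≤ δ * C) (hRR' : R - R' ≤ K * δ * R) :
    R * (δ * (γ / 2)) ≤ R * P - Q * (R - R') := by
  have hmain : R * (δ * γ) ≤ R * P := mul_le_mul_of_nonneg_left hP hR
  have herror : Q * (R - R') ≤ R * (δ * (γ / 2)) := calc
    Q * (R - R') ≤ δ * C * (R - R') := mul_le_mul_of_nonneg_right hQ (sub_nonneg.2 hR')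
    _ ≤ δ * C * (K * δ * R) := by gcongr
    _ = R * (δ * (δ * (C * K))) := by ring
    _ ≤ R * (δ * (γ / 2)) := by gcongr
  linarith

theorem upperSieveIntegral_mul_richertIntegral_lt :
    upperSieveIntegral (5 / 9 / (5 / 36) - 1) * richertIntegral (5 / 36) (1 / 2) (5 / 9) <
      lowerSieveIntegral (5 / 9 / (5 / 36)) / (5 / 9) := by
  have hratio : (5 : ℝ) / 9 / (5 / 36) = 4 := by norm_num
  have hlog : 9 * log (6 / 5) < log (15 / 2) := by
    rw [← Nat.cast_ofNat, ← log_pow]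
    exact log_lt_log (by norm_num) (by norm_num)
  have hsplit : log (18 / 5) = log 3 + log (6 / 5) := by
    rw [← log_mul (by norm_num) (by norm_num)]
    norm_num
  have hinv : log (2 / 15) = -log (15 / 2) := by rw [← log_inv, inv_div]
  rw [hratio, upperSieveIntegral_eq_one (by norm_num),
    lowerSieveIntegral_eq_log (by norm_num) (by norm_num),
    richertIntegral_eq (by norm_num) (by norm_num) (by norm_num)]
  norm_num
  linarith

theorem richert_main_term_lower_bound_general {u t v e : ℝ} (hu : 0 < u) (hut : u < t)
    (htv : t < v) (huv : 2 * u < v) (he : 0 < e)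
    (hpos : upperSieveIntegral (v / u - 1) * richertIntegral u t v <
      lowerSieveIntegral (v / u) / v) :
    ∃ δ₀ : ℝ, 0 < δ₀ ∧ ∃ c : ℝ, 0 < c ∧ ∀ δ ∈ Ioo 0 δ₀, ∀ᶠ X : ℝ in atTop,
      ∀ ψ, IsSqrtTwoStep ψ →
        c / log X ≤ richertMainTerm (X ^ δ) (X ^ u) (X ^ t) (X ^ v) (X ^ e) ψ := by
  obtain ⟨γ, C, hγ, hC, hlinear⟩ :=
    exists_eventually_mul_le_sieveSum_sub_richertWeightedSum hu hut huv hpos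
  obtain ⟨K, hK, hbeta⟩ := exists_eventually_sieveSum_true_sub_false_le he
  obtain ⟨c, hc, hsum⟩ := exists_eventually_div_log_le_sieveSum_true
  refine ⟨min (min u (v - t)) (min (e / 30) (γ / 2 / (C * K))),
    lt_min (lt_min hu (sub_pos.2 htv)) (lt_min (by positivity) (by positivity)),
    c * (γ / 2), by positivity, fun δ ⟨hδ, hδ₀⟩ ↦ ?_⟩
  simp only [lt_min_iff] at hδ₀
  obtain ⟨⟨hδu, hδv⟩, hδe, hδγ⟩ := hδ₀
  filter_upwards [hlinear δ hδ hδu.le (lt_sub_iff_add_lt.1 hδv), hbeta δ hδ (by linarith),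
    hsum δ hδ, eventually_gt_atTop 1] with X ⟨hQ, hP⟩ hRR' hR hX ψ hψ
  have hR' := sieveSum_false_le_sieveProduct_le_sieveSum_true 0 30 ⌈X ^ δ⌉₊ (X ^ e)
  rw [richertMainTerm_eq _ _ _ _ (rpow_le_rpow_of_exponent_le hX.le hδu.le)]
  calc c * (γ / 2) / log X = c / (δ * log X) * (δ * (γ / 2)) := by field_simp
    _ ≤ sieveSum 0 30 ⌈X ^ δ⌉₊ true (X ^ e) * (δ * (γ / 2)) := by
        gcongr
        exact hR 30 _
    _ ≤ _ := mul_half_le_mul_sub_mul_sub (sieveSum_true_pos ..).le (hR'.1.trans hR'.2) hδ.le hC.le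
        ((lt_div_iff₀ (by positivity)).1 hδγ).le (hP ψ hψ) hQ hRR'

end MainTerm

/-- The main term of Richert's weighted sieve is `≫ 1/log X`: there are `δ₀, c > 0`
such that for every `δ ∈ (0, δ₀)`, every smooth `ψ : ℝ → [0,1]` with `ψ(x) = 0` for
`x ≤ 1` and `ψ(x) = 1` for `x ≥ √2`, and every sufficiently large `X`, with
`D = X^{5/9}`, `z = X^{5/36}`, `y = X^{1/2}`, `w = X^δ`, `E = X^{1/1000}`, one has
`M(z, y) ≥ c/log X`. -/
theorem richert_main_term_lower_bound :
    ∃ δ₀ : ℝ, 0 < δ₀ ∧ ∃ c : ℝ, 0 < c ∧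
      ∀ δ : ℝ, δ ∈ Set.Ioo 0 δ₀ →
        ∀ ψ : ℝ → ℝ, ContDiff ℝ (⊤ : ℕ∞) ψ → (∀ x, ψ x ∈ Set.Icc (0 : ℝ) 1) →
          (∀ x : ℝ, x ≤ 1 → ψ x = 0) → (∀ x : ℝ, Real.sqrt 2 ≤ x → ψ x = 1) →
          ∃ X₀ : ℝ, ∀ X : ℝ, X₀ ≤ X →
            c / Real.log X ≤
              richertMainTerm (X ^ δ) (X ^ ((5 : ℝ) / 36)) (X ^ ((1 : ℝ) / 2))
                (X ^ ((5 : ℝ) / 9)) (X ^ ((1 : ℝ) / 1000)) ψ := by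
  obtain ⟨δ₀, hδ₀, c, hc, h⟩ := richert_main_term_lower_bound_general
    (u := 5 / 36) (t := 1 / 2) (v := 5 / 9) (e := 1 / 1000) (by norm_num) (by norm_num)
    (by norm_num) (by norm_num) (by norm_num) upperSieveIntegral_mul_richertIntegral_lt
  exact ⟨δ₀, hδ₀, c, hc, fun δ hδ ψ _ hmem hzero hone ↦
    (Filter.eventually_atTop.1 (h δ hδ)).imp fun X₀ hX X hXX ↦ hX X hXX ψ ⟨hmem, hzero, hone⟩⟩
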